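/- arXiv:1510.04193 — 3 statements merged into one kernel-verified Lean document; each statement's English description precedes it below -/
import Mathlib

section
/- Let X be a Polish space with a Borel measure μ such that μ({x}) = 0 for every x ∈ X, and let ν be a Borel measure on the Cantor space 2^ℕ such that ν({z}) = 0 for every z ∈ 2^ℕ and ν(U) > 0 for every nonempty open U ⊆ 2^ℕ. Assume there is a Borel set Y ⊆ X with ν(2^ℕ) < μ(Y) < ∞. Then there exists a continuous injective map H : 2^ℕ → X that preserves the measure, i.e. μ(H(A)) = ν(A) for every Borel set A ⊆ 2^ℕ. -/
open MeasureTheory Set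
open scoped ENNReal

section IntermediateValues

variable {α ι : Type*} [MeasurableSpace α]

/-- Adding sets of measure at most `δ` one at a time, the measure of the union hits `(a, a + δ]`. -/
theorem exists_subset_measure_inter_biUnion_le (μ : Measure α) {C : Set α} {a δ : ℝ≥0∞}
    (U : ι → Set α) (hU : ∀ i, μ (U i) ≤ δ) (t : Finset ι) (h : a < μ (C ∩ ⋃ i ∈ t, U i)) :
    ∃ s : Finset ι, a < μ (C ∩ ⋃ i ∈ s, U i) ∧ μ (C ∩ ⋃ i ∈ s, U i) ≤ a + δ := by
  classical
  induction t using Finset.induction_on with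
  | empty => simp at h
  | insert i t _ ih =>
    by_cases ht : a < μ (C ∩ ⋃ i ∈ t, U i)
    · exact ih ht
    · refine ⟨insert i t, h, ?_⟩
      rw [Finset.set_biUnion_insert, union_comm, inter_union_distrib_left]
      exact (measure_union_le _ _).trans
        (add_le_add (not_lt.1 ht) ((measure_mono inter_subset_right).trans (hU i)))

variable [TopologicalSpace α]

/-- In an atomless measure, a compact set has subsets of measure in any prescribed interval, cut
out by finite unions of sets from a given neighborhood basis. -/
theorem IsCompact.exists_measure_inter_biUnion_mem_Ioo {μ : Measure α} [μ.OuterRegular]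
    (hμ : ∀ x, μ {x} = 0) {p : Set α → Prop}
    (hp : ∀ x U, IsOpen U → x ∈ U → ∃ V, p V ∧ IsOpen V ∧ x ∈ V ∧ V ⊆ U)
    {C : Set α} (hC : IsCompact C) {a b : ℝ≥0∞} (ha : a < μ C) (hab : a < b) :
    ∃ (V : α → Set α) (s : Finset α), (∀ x, p (V x)) ∧ μ (C ∩ ⋃ x ∈ s, V x) ∈ Ioo a b := by
  obtain ⟨δ, hδ, hδb⟩ := ENNReal.lt_iff_exists_add_pos_lt.1 hab
  have small (x : α) : ∃ V, p V ∧ IsOpen V ∧ x ∈ V ∧ μ V ≤ δ := by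
    obtain ⟨U, hxU, hUo, hU⟩ := Set.exists_isOpen_lt_of_lt (μ := μ) {x} δ (by simpa [hμ x] using hδ)
    obtain ⟨V, hpV, hVo, hxV, hVU⟩ := hp x U hUo (hxU rfl)
    exact ⟨V, hpV, hVo, hxV, (measure_mono hVU).trans hU.le⟩
  choose V hpV hVo hxV hV using small
  obtain ⟨t, -, ht⟩ := hC.elim_nhds_subcover V fun x _ ↦ (hVo x).mem_nhds (hxV x)
  obtain ⟨s, hs, hs'⟩ := exists_subset_measure_inter_biUnion_le μ (C := C) V hV t
    (by rwa [inter_eq_left.2 ht])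
  exact ⟨V, s, hpV, hs, hs'.trans_lt hδb⟩

theorem MeasurableSet.exists_subset_measure_mem_Ioo [OpensMeasurableSpace α] [T2Space α]
    {μ : Measure α} [IsFiniteMeasure μ] [μ.OuterRegular] [μ.InnerRegularCompactLTTop]
    (hμ : ∀ x, μ {x} = 0) {M : Set α} (hM : MeasurableSet M) {a b : ℝ≥0∞}
    (ha : a < μ M) (hab : a < b) :
    ∃ S ⊆ M, MeasurableSet S ∧ μ S ∈ Ioo a b := by
  obtain ⟨K, hKM, hK, haK⟩ := hM.exists_lt_isCompact_of_ne_top (measure_ne_top μ M) ha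
  obtain ⟨V, s, hV, hs⟩ := hK.exists_measure_inter_biUnion_mem_Ioo hμ (p := IsOpen)
    (fun x U hU hx ↦ ⟨U, hU, hU, hx, Subset.rfl⟩) haK hab
  exact ⟨_, inter_subset_left.trans hKM,
    hK.measurableSet.inter (isOpen_biUnion fun x _ ↦ hV x).measurableSet, hs⟩

theorem IsClopen.exists_subset_measure_mem_Ioo [CompactSpace α] [T2Space α]
    [TotallyDisconnectedSpace α] {μ : Measure α} [μ.OuterRegular] (hμ : ∀ x, μ {x} = 0)
    {C : Set α} (hC : IsClopen C) {a b : ℝ≥0∞} (ha : a < μ C) (hab : a < b) :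
    ∃ D ⊆ C, IsClopen D ∧ μ D ∈ Ioo a b := by
  obtain ⟨V, s, hV, hs⟩ := hC.isClosed.isCompact.exists_measure_inter_biUnion_mem_Ioo hμ
    (p := IsClopen) (fun x U hU hx ↦ by
      obtain ⟨V, hV, hxV, hVU⟩ := compact_exists_isClopen_in_isOpen hU hx
      exact ⟨V, hV, hV.isOpen, hxV, hVU⟩) ha hab
  exact ⟨_, inter_subset_left, hC.inter (s.finite_toSet.isClopen_biUnion fun x _ ↦ hV x), hs⟩

end IntermediateValues

section Packing

variable {X Z : Type*} [MetricSpace X] [MeasurableSpace X] [TopologicalSpace Z] [MeasurableSpace Z]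

/-- `L` assigns to the cells of a clopen partition of `C` (the fibers of `L` on `C`) pairwise
disjoint compact subsets of `M` of diameter at most `ε`, whose measure is larger than that of the
cell, but by a factor of at most `1 + ε`. -/
structure IsPacking (μ : Measure X) (ν : Measure Z) (ε : ℝ) (C : Set Z) (M : Set X)
    (L : Z → Set X) : Prop where
  isLocallyConstant : IsLocallyConstant L
  isCompact : ∀ z ∈ C, IsCompact (L z)
  subset : ∀ z ∈ C, L z ⊆ M
  disjoint : ∀ w ∈ C, ∀ z ∈ C, L w ≠ L z → Disjoint (L w) (L z)
  lt_measure : ∀ z ∈ C, ν (C ∩ L ⁻¹' {L z}) < μ (L z)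
  measure_le : ∀ z ∈ C, μ (L z) ≤ (1 + ENNReal.ofReal ε) * ν (C ∩ L ⁻¹' {L z})
  dist_le : ∀ z ∈ C, ∀ x ∈ L z, ∀ y ∈ L z, dist x y ≤ ε

variable {μ : Measure X} {ν : Measure Z} {ε : ℝ} {C : Set Z} {M : Set X} {L : Z → Set X}

theorem IsPacking.nonempty (h : IsPacking μ ν ε C M L) {z : Z} (hz : z ∈ C) : (L z).Nonempty :=
  nonempty_of_measure_ne_zero (h.lt_measure z hz).ne_bot

theorem isPacking_glue {ι : Type*} {f : Z → ι} (hf : IsLocallyConstant f) {P : ι → Set X}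
    (hP : ∀ w ∈ C, ∀ z ∈ C, f w ≠ f z → Disjoint (P (f w)) (P (f z)))
    (hPM : ∀ z ∈ C, P (f z) ⊆ M) {N : ι → Z → Set X}
    (hNc : ∀ i, IsLocallyConstant (N i))
    (hN : ∀ z ∈ C, IsPacking μ ν ε (C ∩ f ⁻¹' {f z}) (P (f z)) (N (f z))) :
    IsPacking μ ν ε C M (fun z ↦ N (f z) z) := by
  have mem {z} (hz : z ∈ C) : z ∈ C ∩ f ⁻¹' {f z} := ⟨hz, rfl⟩
  have disj {w z} (hw : w ∈ C) (hz : z ∈ C) (h : f w ≠ f z) :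
      Disjoint (N (f w) w) (N (f z) z) :=
    (hP w hw z hz h).mono ((hN w hw).subset w (mem hw)) ((hN z hz).subset z (mem hz))
  have fiber {z} (hz : z ∈ C) : C ∩ (fun z ↦ N (f z) z) ⁻¹' {N (f z) z} =
      C ∩ f ⁻¹' {f z} ∩ N (f z) ⁻¹' {N (f z) z} := by
    ext w
    simp only [mem_inter_iff, mem_preimage, mem_singleton_iff]
    refine ⟨fun ⟨hw, h⟩ ↦ ?_, fun ⟨⟨hw, h⟩, h'⟩ ↦ ⟨hw, by rwa [h]⟩⟩
    have hwz : f w = f z := by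
      by_contra hne
      have := disj hw hz hne
      rw [h, disjoint_self] at this
      exact ((hN z hz).nonempty (mem hz)).ne_empty this
    exact ⟨⟨hw, hwz⟩, by rwa [hwz] at h⟩
  refine ⟨?_, fun z hz ↦ (hN z hz).isCompact z (mem hz),
    fun z hz ↦ ((hN z hz).subset z (mem hz)).trans (hPM z hz), fun w hw z hz h ↦ ?_,
    fun z hz ↦ ?_, fun z hz ↦ ?_, fun z hz ↦ (hN z hz).dist_le z (mem hz)⟩
  · rw [IsLocallyConstant.iff_eventually_eq]
    intro z
    filter_upwards [hf.eventually_eq z, (hNc (f z)).eventually_eq z] with w hw hw'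
    rw [hw, hw']
  · by_cases hwz : f w = f z
    · rw [hwz] at h ⊢
      exact (hN z hz).disjoint w ⟨hw, hwz⟩ z (mem hz) h
    · exact disj hw hz hwz
  · rw [fiber hz]
    exact (hN z hz).lt_measure z (mem hz)
  · rw [fiber hz]
    exact (hN z hz).measure_le z (mem hz)

theorem IsPacking.measure_iUnion_le (h : IsPacking μ ν ε univ M L) [CompactSpace Z]
    [OpensMeasurableSpace Z] : μ (⋃ z, L z) ≤ (1 + ENNReal.ofReal ε) * ν univ := by
  have hfin : (range L).Countable := h.isLocallyConstant.range_finite.countable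
  calc
    μ (⋃ z, L z) = μ (⋃ k ∈ range L, k) := by rw [biUnion_range]
    _ ≤ ∑' k : range L, μ k.1 := measure_biUnion_le μ hfin _
    _ ≤ ∑' k : range L, (1 + ENNReal.ofReal ε) * ν (L ⁻¹' {k.1}) :=
      ENNReal.tsum_le_tsum fun ⟨k, z, hz⟩ ↦ by
        subst hz
        simpa using h.measure_le z (mem_univ z)
    _ = (1 + ENNReal.ofReal ε) * ν (⋃ k ∈ range L, L ⁻¹' {k}) := by
      rw [ENNReal.tsum_mul_left, measure_biUnion hfin]
      · exact fun k _ l _ hkl ↦ Disjoint.preimage L (disjoint_singleton.2 hkl)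
      · exact fun k _ ↦ (h.isLocallyConstant.isOpen_fiber k).measurableSet
    _ ≤ _ := by gcongr; exact subset_univ _

variable [BorelSpace X]

theorem IsPacking.measure_le_measure_biUnion (h : IsPacking μ ν ε univ M L) [CompactSpace Z]
    (A : Set Z) : ν A ≤ μ (⋃ z ∈ A, L z) := by
  have hfin : (L '' A).Countable :=
    (h.isLocallyConstant.range_finite.subset (image_subset_range L A)).countable
  have hd : (L '' A).PairwiseDisjoint id := by
    rintro _ ⟨w, -, rfl⟩ _ ⟨z, -, rfl⟩ hne
    exact h.disjoint w (mem_univ w) z (mem_univ z) hne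
  calc
    ν A ≤ ν (⋃ k ∈ L '' A, L ⁻¹' {k}) := measure_mono fun z hz ↦ by
      simp only [mem_iUnion]
      exact ⟨L z, mem_image_of_mem L hz, rfl⟩
    _ ≤ ∑' k : L '' A, ν (L ⁻¹' {k.1}) := measure_biUnion_le ν hfin _
    _ ≤ ∑' k : L '' A, μ k.1 := ENNReal.tsum_le_tsum fun ⟨k, z, _, hz⟩ ↦ by
      subst hz
      simpa using (h.lt_measure z (mem_univ z)).le
    _ = μ (⋃ k ∈ L '' A, k) := by
      refine (measure_biUnion hfin hd ?_).symm
      rintro _ ⟨z, -, rfl⟩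
      exact (h.isCompact z (mem_univ z)).measurableSet
    _ = μ (⋃ z ∈ A, L z) := by rw [biUnion_image]

variable [IsFiniteMeasure μ] [IsFiniteMeasure ν] [μ.OuterRegular] [μ.InnerRegularCompactLTTop]

theorem exists_isPacking_of_dist_le (hμ : ∀ x, μ {x} = 0)
    (hν : ∀ U : Set Z, IsOpen U → U.Nonempty → 0 < ν U) (hε : 0 < ε) (hC : IsOpen C)
    (hM : MeasurableSet M) (hCM : C = ∅ ∨ ν C < μ M) (hMε : ∀ x ∈ M, ∀ y ∈ M, dist x y ≤ ε) :
    ∃ L, IsPacking μ ν ε C M L := by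
  rcases C.eq_empty_or_nonempty with rfl | hne
  · exact ⟨fun _ ↦ ∅, IsLocallyConstant.const _, by simp, by simp, by simp, by simp, by simp,
      by simp⟩
  replace hCM : ν C < μ M := hCM.resolve_left hne.ne_empty
  have hlt : ν C < (1 + ENNReal.ofReal ε) * ν C := by
    rw [add_mul, one_mul]
    exact ENNReal.lt_add_right (measure_ne_top ν C)
      (mul_ne_zero (by simpa using hε) (hν C hC hne).ne')
  obtain ⟨S, hSM, hS, hS1, hS2⟩ := hM.exists_subset_measure_mem_Ioo hμ hCM hlt
  obtain ⟨K, hKS, hK, hCK⟩ := hS.exists_lt_isCompact_of_ne_top (measure_ne_top μ S) hS1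
  have hKM := hKS.trans hSM
  refine ⟨fun _ ↦ K, IsLocallyConstant.const _, fun _ _ ↦ hK, fun _ _ ↦ hKM,
    fun _ _ _ _ h ↦ (h rfl).elim, fun _ _ ↦ ?_, fun _ _ ↦ ?_,
    fun _ _ x hx y hy ↦ hMε x (hKM hx) y (hKM hy)⟩
  · simpa using hCK
  · simpa using (measure_mono hKS).trans hS2.le

variable [CompactSpace Z] [T2Space Z] [TotallyDisconnectedSpace Z] [BorelSpace Z] [ν.OuterRegular]

theorem exists_isClopen_split (hν : ∀ z, ν {z} = 0) (hC : IsClopen C) {a b : ℝ≥0∞} (ha : a ≤ ν C)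
    (hab : ν C < a + b) : ∃ D ⊆ C, IsClopen D ∧ (D = ∅ ∨ ν D < a) ∧ ν (C \ D) < b := by
  rcases eq_or_ne a 0 with rfl | ha0
  · exact ⟨∅, empty_subset C, isClopen_empty, .inl rfl, by simpa using hab⟩
  by_cases hCb : ν C < b
  · exact ⟨∅, empty_subset C, isClopen_empty, .inl rfl, by simpa using hCb⟩
  have hb : b ≠ ∞ := ((not_lt.1 hCb).trans_lt (measure_lt_top ν C)).ne
  have hsub : ν C - b < a := ENNReal.sub_lt_of_lt_add (not_lt.1 hCb) hab
  obtain ⟨D, hDC, hD, hD1, hD2⟩ := hC.exists_subset_measure_mem_Ioo hν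
    (hsub.trans_le ha) hsub
  refine ⟨D, hDC, hD, .inr hD2, ?_⟩
  rw [measure_sdiff hDC hD.isOpen.measurableSet.nullMeasurableSet (measure_ne_top ν D)]
  refine ENNReal.sub_lt_of_lt_add (measure_mono hDC) ?_
  rw [add_comm]
  exact (ENNReal.sub_lt_iff_lt_right hb (not_lt.1 hCb)).1 hD1

theorem exists_isPacking_of_subset_biUnion (hμ : ∀ x, μ {x} = 0) (hν : ∀ z, ν {z} = 0)
    (hν' : ∀ U : Set Z, IsOpen U → U.Nonempty → 0 < ν U) (hε : 0 < ε) {ι : Type*}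
    (B : ι → Set X) (hB : ∀ i, MeasurableSet (B i))
    (hBε : ∀ i, ∀ x ∈ B i, ∀ y ∈ B i, dist x y ≤ ε) (t : Finset ι)
    (C : Set Z) (hC : IsClopen C) (M : Set X) (hM : MeasurableSet M) (hMt : M ⊆ ⋃ i ∈ t, B i)
    (hCM : ν C < μ M) :
    ∃ L, IsPacking μ ν ε C M L := by
  classical
  induction t using Finset.induction_on generalizing C M with
  | empty =>
    obtain rfl : M = ∅ := by simpa using hMt
    simp at hCM
  | insert i t _ ih =>
    have leaf (D : Set Z) (hD : IsClopen D) (h : D = ∅ ∨ ν D < μ (M ∩ B i)) :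
        ∃ L, IsPacking μ ν ε D (M ∩ B i) L :=
      exists_isPacking_of_dist_le hμ hν' hε hD.isOpen (hM.inter (hB i)) h
        fun x hx y hy ↦ hBε i x hx.2 y hy.2
    by_cases hlt : ν C < μ (M ∩ B i)
    · obtain ⟨L, hL⟩ := leaf C hC (.inr hlt)
      exact ⟨L, { hL with subset := fun z hz ↦ (hL.subset z hz).trans inter_subset_left }⟩
    obtain ⟨D, hDC, hD, hD1, hD2⟩ := exists_isClopen_split hν hC (not_lt.1 hlt)
      (b := μ (M \ B i)) (by rwa [measure_inter_add_sdiff M (hB i)])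
    obtain ⟨L₁, hL₁⟩ := leaf D hD hD1
    obtain ⟨L₂, hL₂⟩ := ih (C \ D) (hC.diff hD) (M \ B i) (hM.diff (hB i)) (by
      rintro x ⟨hxM, hxB⟩
      have := hMt hxM
      rw [Finset.set_biUnion_insert] at this
      exact this.resolve_left hxB) hD2
    have hf : IsLocallyConstant (fun z ↦ decide (z ∈ D)) := by
      rw [IsLocallyConstant.iff_eventually_eq]
      intro z
      by_cases hz : z ∈ D
      · filter_upwards [hD.isOpen.mem_nhds hz] with w hw
        simp [hz, hw]
      · filter_upwards [hD.compl.isOpen.mem_nhds hz] with w hw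
        simpa [hz] using hw
    refine ⟨_, isPacking_glue (M := M) hf (P := fun b ↦ if b then M ∩ B i else M \ B i)
      (N := fun b ↦ if b then L₁ else L₂) ?_ ?_ ?_ ?_⟩
    · intro w _ z _ h
      have hdisj : Disjoint (M ∩ B i) (M \ B i) := disjoint_sdiff_inter.symm
      by_cases hw : w ∈ D <;> by_cases hz : z ∈ D <;> simp_all [disjoint_comm]
    · intro z _
      by_cases hz : z ∈ D <;> simp [hz, inter_subset_left]
    · rintro (_ | _)
      · simpa using hL₂.isLocallyConstant
      · simpa using hL₁.isLocallyConstant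
    · intro z _
      by_cases hz : z ∈ D
      · have : C ∩ (fun z ↦ decide (z ∈ D)) ⁻¹' {decide (z ∈ D)} = D := by
          ext w; simpa [hz] using @hDC w
        rw [this]
        simpa [hz] using hL₁
      · have : C ∩ (fun z ↦ decide (z ∈ D)) ⁻¹' {decide (z ∈ D)} = C \ D := by
          ext w; simp [hz]
        rw [this]
        simpa [hz] using hL₂

theorem exists_isPacking (hμ : ∀ x, μ {x} = 0) (hν : ∀ z, ν {z} = 0)
    (hν' : ∀ U : Set Z, IsOpen U → U.Nonempty → 0 < ν U) (hε : 0 < ε)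
    (hC : IsClopen C) (hM : MeasurableSet M) (hCM : ν C < μ M) :
    ∃ L, IsPacking μ ν ε C M L := by
  obtain ⟨K, hKM, hK, hCK⟩ := hM.exists_lt_isCompact_of_ne_top (measure_ne_top μ M) hCM
  obtain ⟨t, -, ht⟩ := hK.elim_nhds_subcover (fun x ↦ Metric.ball x (ε / 2))
    fun x _ ↦ Metric.ball_mem_nhds x (half_pos hε)
  obtain ⟨L, hL⟩ := exists_isPacking_of_subset_biUnion hμ hν hν' hε
    (fun x : X ↦ Metric.ball x (ε / 2)) (fun x ↦ Metric.isOpen_ball.measurableSet)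
    (fun i x hx y hy ↦ by
      have := dist_triangle_right x y i
      rw [Metric.mem_ball] at hx hy
      linarith) t C hC K hK.measurableSet ht hCK
  exact ⟨L, { hL with subset := fun z hz ↦ (hL.subset z hz).trans hKM }⟩

/-- A packing can be refined to one of any given mesh that separates a clopen set from its
complement. -/
theorem IsPacking.exists_refinement (h : IsPacking μ ν ε univ M L) (hμ : ∀ x, μ {x} = 0)
    (hν : ∀ z, ν {z} = 0) (hν' : ∀ U : Set Z, IsOpen U → U.Nonempty → 0 < ν U) {f : Z → Bool}
    (hf : IsLocallyConstant f) {ε' : ℝ} (hε' : 0 < ε') :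
    ∃ L', IsPacking μ ν ε' univ M L' ∧ (∀ z, L' z ⊆ L z) ∧
      ∀ w z, f w ≠ f z → Disjoint (L' w) (L' z) := by
  have split (k : Set X) : ∃ S ⊆ k, k ∈ range L → MeasurableSet S ∧
      ν (L ⁻¹' {k} ∩ f ⁻¹' {true}) < μ S ∧ ν (L ⁻¹' {k} ∩ f ⁻¹' {false}) < μ (k \ S) := by
    by_cases hk : k ∈ range L
    swap
    · exact ⟨∅, empty_subset k, fun h ↦ (hk h).elim⟩
    obtain ⟨z, rfl⟩ := hk
    have hLz := (h.isCompact z (mem_univ z)).measurableSet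
    have hsum : ν (L ⁻¹' {L z} ∩ f ⁻¹' {true}) + ν (L ⁻¹' {L z} ∩ f ⁻¹' {false}) < μ (L z) := by
      have hcompl : L ⁻¹' {L z} ∩ f ⁻¹' {false} = L ⁻¹' {L z} \ f ⁻¹' {true} := by
        ext w; simp
      rw [hcompl, measure_inter_add_sdiff _ (hf {true}).measurableSet]
      simpa using h.lt_measure z (mem_univ z)
    obtain ⟨S, hSL, hS, hS1, hS2⟩ := hLz.exists_subset_measure_mem_Ioo hμ
      (le_self_add.trans_lt hsum) (lt_tsub_iff_right.2 hsum)
    refine ⟨S, hSL, fun _ ↦ ⟨hS, hS1, ?_⟩⟩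
    rw [measure_sdiff hSL hS.nullMeasurableSet (measure_ne_top μ S)]
    rw [lt_tsub_iff_right] at hS2 ⊢
    rwa [add_comm]
  choose S hSk hS using split
  let P : Set X × Bool → Set X := fun i ↦ if i.2 then S i.1 else i.1 \ S i.1
  have hPk (i) : P i ⊆ i.1 := by
    rcases i with ⟨k, _ | _⟩
    · simp [P]
    · simpa [P] using hSk k
  let g : Z → Set X × Bool := fun z ↦ (L z, f z)
  have hg : IsLocallyConstant g := h.isLocallyConstant.prodMk hf
  have pack (i) : ∃ N, IsLocallyConstant N ∧
      (i ∈ range g → IsPacking μ ν ε' (univ ∩ g ⁻¹' {i}) (P i) N) := by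
    by_cases hi : i ∈ range g
    swap
    · exact ⟨fun _ ↦ ∅, IsLocallyConstant.const _, fun h ↦ (hi h).elim⟩
    have hfib : g ⁻¹' {i} = L ⁻¹' {i.1} ∩ f ⁻¹' {i.2} := by
      ext w; simp [g, Prod.ext_iff]
    have hkL : i.1 ∈ range L := by
      obtain ⟨z, rfl⟩ := hi
      exact mem_range_self z
    have hk : MeasurableSet i.1 := by
      obtain ⟨z, hz⟩ := hkL
      exact hz ▸ (h.isCompact z (mem_univ z)).measurableSet
    obtain ⟨hSm, h1, h2⟩ := hS i.1 hkL
    have : ∃ N, IsPacking μ ν ε' (univ ∩ g ⁻¹' {i}) (P i) N := by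
      rw [univ_inter]
      refine exists_isPacking hμ hν hν' hε' (hg.isClopen_fiber i) ?_ ?_
      · rcases i with ⟨k, _ | _⟩
        · simpa [P] using hk.diff hSm
        · simpa [P] using hSm
      · rw [hfib]
        rcases i with ⟨k, _ | _⟩
        · simpa [P] using h2
        · simpa [P] using h1
    obtain ⟨N, hN⟩ := this
    exact ⟨N, hN.isLocallyConstant, fun _ ↦ hN⟩
  choose N hNc hN using pack
  have hN' (z) : IsPacking μ ν ε' (univ ∩ g ⁻¹' {g z}) (P (g z)) (N (g z)) := hN _ ⟨z, rfl⟩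
  have hsub (z) : N (g z) z ⊆ P (g z) := (hN' z).subset z ⟨mem_univ z, rfl⟩
  have hdisj (w z) (hne : g w ≠ g z) : Disjoint (P (g w)) (P (g z)) := by
    by_cases hL : L w = L z
    · have hfne : f w ≠ f z := fun hf ↦ hne (Prod.ext hL hf)
      cases hw : f w <;> cases hz : f z <;> simp_all [P, g]
      · exact disjoint_sdiff_left
      · exact disjoint_sdiff_right
    · exact (h.disjoint w (mem_univ w) z (mem_univ z) hL).mono (hPk _) (hPk _)
  refine ⟨_, isPacking_glue hg (fun w _ z _ ↦ hdisj w z) (fun z _ ↦ ?_) hNc (fun z _ ↦ hN' z),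
    fun z ↦ (hsub z).trans (hPk _), fun w z hne ↦ ?_⟩
  · exact (hPk _).trans (h.subset z (mem_univ z))
  · exact (hdisj w z fun hg ↦ hne (congrArg Prod.snd hg)).mono (hsub w) (hsub z)

end Packing

/-- The embedding theorem for a finite measure on a metrized Polish space, with image inside a
prescribed set `M`. -/
theorem exists_continuous_injective_measure_image_eq {X : Type*} [MetricSpace X] [MeasurableSpace X]
    [BorelSpace X] {μ : Measure X} [IsFiniteMeasure μ] [μ.InnerRegularCompactLTTop]
    [μ.OuterRegular] {ν : Measure (ℕ → Bool)} [IsFiniteMeasure ν]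
    (hμ : ∀ x, μ {x} = 0) (hν : ∀ z, ν {z} = 0)
    (hν' : ∀ U : Set (ℕ → Bool), IsOpen U → U.Nonempty → 0 < ν U) {M : Set X}
    (hM : MeasurableSet M) (hνM : ν univ < μ M) :
    ∃ H : (ℕ → Bool) → X, Continuous H ∧ Function.Injective H ∧ range H ⊆ M ∧
      ∀ A : Set (ℕ → Bool), MeasurableSet A → μ (H '' A) = ν A := by
  have hf (n : ℕ) : IsLocallyConstant (fun z : ℕ → Bool ↦ z n) :=
    (IsLocallyConstant.iff_continuous _).2 (continuous_apply n)
  have hε (n : ℕ) : (0 : ℝ) < 1 / ((n : ℝ) + 1) := Nat.one_div_pos_of_nat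
  obtain ⟨L₀, hL₀⟩ := exists_isPacking hμ hν hν' (hε 0) isClopen_univ hM hνM
  have step (n : ℕ) (L : {L // IsPacking μ ν (1 / ((n : ℝ) + 1)) univ M L}) :
      ∃ L' : {L // IsPacking μ ν (1 / (((n + 1 : ℕ) : ℝ) + 1)) univ M L},
        (∀ z, L'.1 z ⊆ L.1 z) ∧ ∀ w z, w n ≠ z n → Disjoint (L'.1 w) (L'.1 z) := by
    obtain ⟨L', hL', h⟩ := L.2.exists_refinement hμ hν hν' (hf n) (hε (n + 1))
    exact ⟨⟨L', hL'⟩, h⟩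
  choose next hnext_sub hnext_disj using step
  let K : (n : ℕ) → {L // IsPacking μ ν (1 / ((n : ℝ) + 1)) univ M L} :=
    fun n ↦ Nat.rec ⟨L₀, hL₀⟩ next n
  have hK (n : ℕ) := (K n).2
  have hH (z : ℕ → Bool) : (⋂ n, (K n).1 z).Nonempty :=
    IsCompact.nonempty_iInter_of_sequence_nonempty_isCompact_isClosed _
      (fun n ↦ hnext_sub n (K n) z) (fun n ↦ (hK n).nonempty (mem_univ z))
      ((hK 0).isCompact z (mem_univ z)) (fun n ↦ ((hK n).isCompact z (mem_univ z)).isClosed)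
  choose H hH using hH
  have hHK (n z) : H z ∈ (K n).1 z := mem_iInter.1 (hH z) n
  have hHc : Continuous H := by
    rw [continuous_iff_continuousAt]
    intro z
    rw [ContinuousAt, Metric.tendsto_nhds]
    intro δ hδ
    obtain ⟨n, hn⟩ := exists_nat_one_div_lt hδ
    filter_upwards [(hK n).isLocallyConstant.eventually_eq z] with w hw
    exact ((hK n).dist_le z (mem_univ z) _ (hw ▸ hHK n w) _ (hHK n z)).trans_lt hn
  have hHi : Function.Injective H := by
    intro w z hwz
    funext n
    by_contra hne
    exact disjoint_left.1 (hnext_disj n (K n) w z hne) (hHK (n + 1) w) (hwz ▸ hHK (n + 1) z)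
  have hHe : MeasurableEmbedding H := hHc.isClosedEmbedding hHi |>.measurableEmbedding
  have lower_closed (A : Set (ℕ → Bool)) (hA : IsClosed A) : ν A ≤ μ (H '' A) := by
    rw [Set.measure_eq_iInf_isOpen (H '' A) μ]
    refine le_iInf₂ fun V hV ↦ le_iInf fun hVo ↦ ?_
    obtain ⟨δ, hδ, hδV⟩ := (hA.isCompact.image hHc).exists_thickening_subset_open hVo hV
    obtain ⟨n, hn⟩ := exists_nat_one_div_lt hδ
    refine ((hK n).measure_le_measure_biUnion A).trans (measure_mono ?_)
    refine iUnion₂_subset fun z hz x hx ↦ hδV ?_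
    exact Metric.mem_thickening_iff.2 ⟨H z, mem_image_of_mem H hz,
      ((hK n).dist_le z (mem_univ z) x hx _ (hHK n z)).trans_lt hn⟩
  have lower (A : Set (ℕ → Bool)) (hA : MeasurableSet A) : ν A ≤ μ (H '' A) := by
    refine le_of_forall_lt fun r hr ↦ ?_
    obtain ⟨F, hFA, hF, hrF⟩ := hA.exists_lt_isClosed_of_ne_top (measure_ne_top ν A) hr
    exact hrF.trans_le ((lower_closed F hF).trans (measure_mono (image_mono hFA)))
  have upper : μ (H '' univ) ≤ ν univ := by
    have hn (n : ℕ) : μ (H '' univ) ≤ (1 + ENNReal.ofReal (1 / ((n : ℝ) + 1))) * ν univ := by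
      refine (measure_mono ?_).trans (hK n).measure_iUnion_le
      rintro _ ⟨z, -, rfl⟩
      exact mem_iUnion.2 ⟨z, hHK n z⟩
    have hlim : Filter.Tendsto (fun n : ℕ ↦ (1 + ENNReal.ofReal (1 / ((n : ℝ) + 1))) * ν univ)
        Filter.atTop (nhds ((1 + ENNReal.ofReal 0) * ν univ)) :=
      ENNReal.Tendsto.mul_const
        ((ENNReal.tendsto_ofReal tendsto_one_div_add_atTop_nhds_zero_nat).const_add 1)
        (.inr (measure_ne_top ν univ))
    simpa using ge_of_tendsto' hlim hn
  refine ⟨H, hHc, hHi, ?_, fun A hA ↦ (lower A hA).antisymm' ?_⟩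
  · rintro _ ⟨z, rfl⟩
    exact (hK 0).subset z (mem_univ z) (hHK 0 z)
  · have hsum : μ (H '' A) + μ (H '' Aᶜ) ≤ ν A + ν Aᶜ := by
      rw [measure_add_measure_compl hA, ← measure_union
        ((disjoint_image_iff hHi).2 disjoint_compl_right) (hHe.measurableSet_image.2 hA.compl),
        ← image_union, union_compl_self]
      exact upper
    refine ENNReal.le_of_add_le_add_right (measure_ne_top ν Aᶜ) (le_trans ?_ hsum)
    gcongr
    exact lower _ hA.compl

/-- **Measure-preserving embedding of the Cantor space in a Polish space.**
If `μ` is a nonsingular Borel measure on a Polish space `X` and `ν` is a nonsingular,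
fully supported Borel measure on the Cantor space `ℕ → Bool` such that some Borel set
`Y ⊆ X` satisfies `ν(2^ℕ) < μ(Y) < ∞`, then there is a continuous injection
`H : 2^ℕ → X` with `μ(H '' A) = ν A` for every Borel `A`. -/
theorem stmt_0 {X : Type*} [TopologicalSpace X] [PolishSpace X]
    [MeasurableSpace X] [BorelSpace X]
    (μ : Measure X) (ν : Measure (ℕ → Bool))
    (hμns : ∀ x : X, μ {x} = 0)
    (hνns : ∀ z : ℕ → Bool, ν {z} = 0)
    (hνfs : ∀ U : Set (ℕ → Bool), IsOpen U → U.Nonempty → 0 < ν U)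
    (hY : ∃ Y : Set X, MeasurableSet Y ∧ ν univ < μ Y ∧ μ Y < ⊤) :
    ∃ H : (ℕ → Bool) → X, Continuous H ∧ Function.Injective H ∧
      ∀ A : Set (ℕ → Bool), MeasurableSet A → μ (H '' A) = ν A := by
  obtain ⟨Y, hY, hνY, hYfin⟩ := hY
  let := TopologicalSpace.upgradeIsCompletelyMetrizable X
  have : IsFiniteMeasure ν := ⟨hνY.trans hYfin⟩
  have : IsFiniteMeasure (μ.restrict Y) := ⟨by simpa using hYfin⟩
  obtain ⟨H, hHc, hHi, hHY, hH⟩ := exists_continuous_injective_measure_image_eq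
    (μ := μ.restrict Y) (fun x ↦ Measure.restrict_le_self.absolutelyContinuous (hμns x)) hνns hνfs hY (by simpa using hνY)
  refine ⟨H, hHc, hHi, fun A hA ↦ ?_⟩
  rw [← hH A hA, Measure.restrict_eq_self μ ((image_subset_range H A).trans hHY)]
end

section
/- Let μ be the coin-tossing measure on the Cantor space 2^ℕ and let P₃ = {z : ℕ×ℕ → {0,1} : ∀n ∃m ∀k ≥ m, z(n,k) = 0}, a Π⁰₃-complete subset of the Polish space of functions ℕ×ℕ → {0,1}. There exists a map f assigning to each z : ℕ×ℕ → {0,1} a Borel set f(z) ⊆ 2^ℕ such that: (i) f is continuous into the measure algebra, i.e. for every z and every ε > 0 there is N ∈ ℕ such that for all w with w(i,j) = z(i,j) whenever i,j < N, one has μ(f(z) △ f(w)) ≤ ε; and (ii) z ∈ P₃ if and only if there exists a compact set K ⊆ 2^ℕ with μ(f(z) △ K) = 0. (This witnesses that the set of measure-classes of compact sets is Π⁰₃-hard in the measure algebra of 2^ℕ.) -/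
open MeasureTheory Set
open scoped symmDiff

/-- The basic clopen cylinder of length `n` around `x` in the Cantor space. -/
def cylinder (x : ℕ → Bool) (n : ℕ) : Set (ℕ → Bool) :=
  {y | ∀ i < n, y i = x i}

namespace CantorMeasure

/-- The set of binary sequences that agree with `p` on the finite set `S` of coordinates. -/
def agreeOn (S : Finset ℕ) (p : ℕ → Bool) : Set (ℕ → Bool) :=
  {x | ∀ i ∈ S, x i = p i}

lemma isClopen_agreeOn (S : Finset ℕ) (p : ℕ → Bool) : IsClopen (agreeOn S p) := by
  have h : agreeOn S p = ⋂ i ∈ S, (fun x : ℕ → Bool => x i) ⁻¹' {p i} := by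
    ext x
    simp [agreeOn]
  rw [h]
  exact isClopen_biInter_finset fun i _ => (isClopen_discrete _).preimage (continuous_apply i)

lemma cylinder_eq_agreeOn (x : ℕ → Bool) (n : ℕ) :
    _root_.cylinder x n = agreeOn (Finset.range n) x := by
  ext y
  simp [_root_.cylinder, agreeOn]

lemma exists_cylinder_subset {U : Set (ℕ → Bool)} (hU : IsOpen U) {x : ℕ → Bool} (hx : x ∈ U) :
    ∃ n, _root_.cylinder x n ⊆ U := by
  obtain ⟨S, u, hu, hsub⟩ := isOpen_pi_iff.1 hU x hx
  refine ⟨S.sup id + 1, fun y hy => hsub fun i hi => ?_⟩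
  have hlt : i < S.sup id + 1 := Nat.lt_succ_of_le (Finset.le_sup (f := id) hi)
  rw [hy i hlt]
  exact (hu i hi).2

/-- The sequences whose first `true` is at position `n`. -/
def firstTrue (n : ℕ) : Set (ℕ → Bool) :=
  agreeOn (Finset.range (n + 1)) fun i => decide (n ≤ i)

/-- The sequences whose first `true` is at position `n` and which are constantly `true` on a block
of length `k + 2` starting at position `n + 1 + k`. -/
def block (n k : ℕ) : Set (ℕ → Bool) :=
  agreeOn (Finset.range (n + 1) ∪ Finset.Ico (n + 1 + k) (n + 1 + k + (k + 2)))
    fun i => decide (n ≤ i)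

lemma block_subset_firstTrue (n k : ℕ) : block n k ⊆ firstTrue n :=
  fun _ hx i hi => hx i (Finset.mem_union_left _ hi)

lemma eq_of_mem_firstTrue {x : ℕ → Bool} {m n : ℕ} (hm : x ∈ firstTrue m)
    (hn : x ∈ firstTrue n) : m = n := by
  rcases lt_trichotomy m n with h | h | h
  · have h₁ := hm m (by simp)
    have h₂ := hn m (by simp; omega)
    simp [h₁] at h₂
    omega
  · exact h
  · have h₁ := hm n (by simp; omega)
    have h₂ := hn n (by simp)
    simp [h₂] at h₁
    omega

lemma exists_mem_firstTrue {x : ℕ → Bool} (hx : x ≠ fun _ => false) : ∃ n, x ∈ firstTrue n := by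
  have h : ∃ n, x n = true := by
    by_contra! h
    exact hx (funext fun i => by simpa using h i)
  refine ⟨Nat.find h, fun i hi => ?_⟩
  rcases (Nat.lt_succ_iff.1 (Finset.mem_range.1 hi)).lt_or_eq with hlt | heq
  · have := Nat.find_min h hlt
    simp_all
  · rw [heq, Nat.find_spec h]
    simp

/-- Every point of `firstTrue n` is approximated by points of `block n k` as `k → ∞`. -/
lemma exists_mem_block_inter_cylinder {x : ℕ → Bool} {n m k : ℕ} (hx : x ∈ firstTrue n)
    (hk : m ≤ k) : ∃ y ∈ block n k, y ∈ _root_.cylinder x m := by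
  refine ⟨fun i => if i < n + 1 + k then x i else true, fun i hi => ?_, fun i hi => ?_⟩
  · rcases Finset.mem_union.1 hi with h | h
    · have hlt := Finset.mem_range.1 h
      simpa [show i < n + 1 + k by omega] using hx i h
    · have hle := (Finset.mem_Ico.1 h).1
      simp [show ¬ i < n + 1 + k by omega, show n ≤ i by omega]
  · simp [show i < n + 1 + k by omega]

/-- The union of the blocks `block n k` over all `(n, k)` with `z n k = true`. -/
def blockUnion (z : ℕ → ℕ → Bool) : Set (ℕ → Bool) :=
  ⋃ (n) (k) (_ : z n k = true), block n k

lemma mem_blockUnion {z : ℕ → ℕ → Bool} {x : ℕ → Bool} :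
    x ∈ blockUnion z ↔ ∃ n k, z n k = true ∧ x ∈ block n k := by
  simp [blockUnion]

lemma isOpen_blockUnion (z : ℕ → ℕ → Bool) : IsOpen (blockUnion z) :=
  isOpen_iUnion fun _ => isOpen_iUnion fun _ => isOpen_iUnion fun _ => (isClopen_agreeOn _ _).isOpen

/-- If every row of `z` is eventually `false`, adding the zero sequence to `blockUnion z` yields a
closed set. -/
lemma exists_isCompact_of_eventually_false {z : ℕ → ℕ → Bool}
    (hz : ∀ n, ∃ m, ∀ k ≥ m, z n k = false) :
    ∃ K, IsCompact K ∧ blockUnion z ∆ K ⊆ {fun _ => false} := by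
  refine ⟨⋂ n, ((firstTrue n)ᶜ ∪ ⋃ k ∈ {k | z n k = true}, block n k), ?_, ?_⟩
  · refine (isClosed_iInter fun n => ?_).isCompact
    obtain ⟨m, hm⟩ := hz n
    have hfin : {k | z n k = true}.Finite := by
      refine (Set.finite_lt_nat m).subset fun k hk => ?_
      by_contra hlt
      have := hm k (not_lt.1 hlt)
      simp_all
    exact (isClopen_agreeOn _ _).compl.isClosed.union
      (hfin.isClosed_biUnion fun k _ => (isClopen_agreeOn _ _).isClosed)
  · rintro x (⟨hx, hxK⟩ | ⟨hxK, hx⟩)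
    · refine absurd (mem_iInter.2 fun n => ?_) hxK
      obtain ⟨n', k, hzk, hxk⟩ := mem_blockUnion.1 hx
      by_cases hn : x ∈ firstTrue n
      · obtain rfl := eq_of_mem_firstTrue (block_subset_firstTrue _ _ hxk) hn
        exact Or.inr (mem_biUnion (show k ∈ {k | z n' k = true} from hzk) hxk)
      · exact Or.inl hn
    · by_contra hne
      obtain ⟨n, hn⟩ := exists_mem_firstTrue hne
      rcases mem_iInter.1 hxK n with h | h
      · exact h hn
      · obtain ⟨k, hzk, hxk⟩ := mem_iUnion₂.1 h
        exact hx (mem_blockUnion.2 ⟨n, k, hzk, hxk⟩)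

/-- If row `n` of `z` is infinitely often `true`, then `blockUnion z` is dense in `firstTrue n`. -/
lemma firstTrue_subset_closure {z : ℕ → ℕ → Bool} {n : ℕ}
    (hz : ∀ m, ∃ k ≥ m, z n k = true) : firstTrue n ⊆ closure (blockUnion z) := by
  intro x hx
  refine mem_closure_iff.2 fun U hU hxU => ?_
  obtain ⟨m, hm⟩ := exists_cylinder_subset hU hxU
  obtain ⟨k, hk, hzk⟩ := hz m
  obtain ⟨y, hy, hyc⟩ := exists_mem_block_inter_cylinder hx hk
  exact ⟨y, hm hyc, mem_blockUnion.2 ⟨n, k, hzk, hy⟩⟩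

section Measure

variable {μ : Measure (ℕ → Bool)}

lemma measure_agreeOn_le (hμ : ∀ (x : ℕ → Bool) (n : ℕ), μ (_root_.cylinder x n) = 1 / 2 ^ n)
    (S : Finset ℕ) (p : ℕ → Bool) : μ (agreeOn S p) ≤ 2⁻¹ ^ S.card := by
  obtain ⟨N, hN⟩ : ∃ N, S ⊆ Finset.range N := S.exists_nat_subset_range
  induction h : (Finset.range N \ S).card generalizing S p with
  | zero =>
    have hS : S = Finset.range N :=
      hN.antisymm (Finset.sdiff_eq_empty_iff_subset.1 (Finset.card_eq_zero.1 h))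
    rw [hS, ← cylinder_eq_agreeOn, hμ, Finset.card_range, one_div, ENNReal.inv_pow]
  | succ d ih =>
    obtain ⟨i, hi⟩ : (Finset.range N \ S).Nonempty := Finset.card_pos.1 (by omega)
    obtain ⟨hiN, hiS⟩ := Finset.mem_sdiff.1 hi
    have hsub : insert i S ⊆ Finset.range N := Finset.insert_subset hiN hN
    have hcard : (Finset.range N \ insert i S).card = d := by
      rw [Finset.sdiff_insert, Finset.card_erase_of_mem hi, h, Nat.add_sub_cancel]
    have hcover : agreeOn S p ⊆ agreeOn (insert i S) (Function.update p i false) ∪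
        agreeOn (insert i S) (Function.update p i true) := by
      intro x hx
      have key : x ∈ agreeOn (insert i S) (Function.update p i (x i)) := by
        intro j hj
        by_cases hji : j = i
        · subst hji
          simp
        · rw [Function.update_of_ne hji]
          exact hx j (Finset.mem_of_mem_insert_of_ne hj hji)
      cases hxi : x i <;> rw [hxi] at key
      · exact Or.inl key
      · exact Or.inr key
    calc μ (agreeOn S p) ≤ _ := (measure_mono hcover).trans (measure_union_le _ _)
      _ ≤ 2⁻¹ ^ (insert i S).card + 2⁻¹ ^ (insert i S).card :=
        add_le_add (ih _ _ hsub hcard) (ih _ _ hsub hcard)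
      _ = 2⁻¹ ^ S.card := by
        rw [Finset.card_insert_of_notMem hiS, pow_succ, ← mul_add, ENNReal.inv_two_add_inv_two,
          mul_one]

lemma measure_block_le (hμ : ∀ (x : ℕ → Bool) (n : ℕ), μ (_root_.cylinder x n) = 1 / 2 ^ n)
    (n k : ℕ) : μ (block n k) ≤ 2⁻¹ ^ (n + 1) * (2⁻¹ * 2⁻¹ ^ (k + 1)) := by
  refine (measure_agreeOn_le hμ _ _).trans_eq ?_
  rw [Finset.card_union_of_disjoint, Finset.card_range, Nat.card_Ico, ← pow_succ', ← pow_add]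
  · congr 1
    omega
  · refine Finset.disjoint_left.2 fun i hi hi' => ?_
    rw [Finset.mem_range] at hi
    rw [Finset.mem_Ico] at hi'
    omega

lemma tsum_inv_two_pow_succ : ∑' k : ℕ, (2⁻¹ : ENNReal) ^ (k + 1) = 1 := by
  simp_rw [pow_succ]
  rw [ENNReal.tsum_mul_right, ENNReal.tsum_geometric, ENNReal.one_sub_inv_two, inv_inv]
  exact ENNReal.mul_inv_cancel two_ne_zero ENNReal.ofNat_ne_top

lemma tsum_measure_block_le (hμ : ∀ (x : ℕ → Bool) (n : ℕ), μ (_root_.cylinder x n) = 1 / 2 ^ n)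
    (n : ℕ) : ∑' k, μ (block n k) ≤ 2⁻¹ ^ (n + 1) * 2⁻¹ := by
  refine (ENNReal.tsum_le_tsum fun k => measure_block_le hμ n k).trans_eq ?_
  rw [ENNReal.tsum_mul_left, ENNReal.tsum_mul_left, tsum_inv_two_pow_succ, mul_one]

lemma tsum_prod_measure_block_ne_top
    (hμ : ∀ (x : ℕ → Bool) (n : ℕ), μ (_root_.cylinder x n) = 1 / 2 ^ n) :
    ∑' p : ℕ × ℕ, μ (block p.1 p.2) ≠ ⊤ := by
  rw [ENNReal.tsum_prod (f := fun n k => μ (block n k))]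
  refine ne_top_of_le_ne_top ?_ (ENNReal.tsum_le_tsum fun n => tsum_measure_block_le hμ n)
  rw [ENNReal.tsum_mul_right, tsum_inv_two_pow_succ, one_mul]
  simp

lemma measure_singleton_eq_zero
    (hμ : ∀ (x : ℕ → Bool) (n : ℕ), μ (_root_.cylinder x n) = 1 / 2 ^ n) (x : ℕ → Bool) :
    μ {x} = 0 := by
  have hlim : Filter.Tendsto (fun n : ℕ => (2⁻¹ : ENNReal) ^ n) Filter.atTop (nhds 0) :=
    ENNReal.tendsto_pow_atTop_nhds_zero_of_lt_one (by simp)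
  refine le_antisymm (ge_of_tendsto' hlim fun n => ?_) zero_le
  have hsub : {x} ⊆ _root_.cylinder x n := by
    rintro y rfl i _
    rfl
  refine (measure_mono hsub).trans_eq ?_
  rw [hμ, one_div, ENNReal.inv_pow]

lemma eq_empty_of_isOpen_of_measure_zero
    (hμ : ∀ (x : ℕ → Bool) (n : ℕ), μ (_root_.cylinder x n) = 1 / 2 ^ n) {U : Set (ℕ → Bool)}
    (hU : IsOpen U) (h : μ U = 0) : U = ∅ := by
  refine eq_empty_of_forall_notMem fun x hx => ?_
  obtain ⟨n, hn⟩ := exists_cylinder_subset hU hx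
  have h0 := measure_mono_null hn h
  rw [hμ] at h0
  simp at h0

lemma exists_forall_measure_symmDiff_le
    (hμ : ∀ (x : ℕ → Bool) (n : ℕ), μ (_root_.cylinder x n) = 1 / 2 ^ n) {ε : ENNReal}
    (hε : 0 < ε) : ∃ N : ℕ, ∀ z w : ℕ → ℕ → Bool, (∀ i < N, ∀ j < N, w i j = z i j) →
      μ (blockUnion z ∆ blockUnion w) ≤ ε := by
  obtain ⟨s, hs⟩ := ((ENNReal.tendsto_tsum_compl_atTop_zero
    (tsum_prod_measure_block_ne_top hμ)).eventually_lt_const hε).exists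
  refine ⟨s.sup (fun p => max p.1 p.2) + 1, fun z w hzw => ?_⟩
  have hmem : ∀ n k, z n k ≠ w n k → (n, k) ∉ s := by
    intro n k hne hnk
    have hle : max n k ≤ _ := Finset.le_sup (f := fun p : ℕ × ℕ => max p.1 p.2) hnk
    exact hne (hzw n (by omega) k (by omega)).symm
  have hsub : blockUnion z ∆ blockUnion w ⊆ ⋃ p : {p // p ∉ s}, block p.1.1 p.1.2 := by
    rintro x (⟨hx, hx'⟩ | ⟨hx, hx'⟩) <;>
    · obtain ⟨n, k, hnk, hxk⟩ := mem_blockUnion.1 hx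
      refine mem_iUnion.2 ⟨⟨(n, k), hmem n k fun heq => ?_⟩, hxk⟩
      exact hx' (mem_blockUnion.2 ⟨n, k, by simp_all, hxk⟩)
  exact ((measure_mono hsub).trans (measure_iUnion_le _)).trans hs.le

/-- If row `n` of `z` is infinitely often `true`, then `blockUnion z` is not equal to a compact set
modulo null sets. -/
lemma measure_symmDiff_ne_zero
    (hμ : ∀ (x : ℕ → Bool) (n : ℕ), μ (_root_.cylinder x n) = 1 / 2 ^ n)
    {z : ℕ → ℕ → Bool} {n : ℕ} (hz : ∀ m, ∃ k ≥ m, z n k = true) {K : Set (ℕ → Bool)}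
    (hK : IsCompact K) : μ (blockUnion z ∆ K) ≠ 0 := by
  intro h0
  have hsub : blockUnion z ⊆ K := sdiff_eq_empty.1 <|
    eq_empty_of_isOpen_of_measure_zero hμ ((isOpen_blockUnion z).sdiff hK.isClosed)
      (measure_mono_null subset_union_left h0)
  have hfirst : firstTrue n ⊆ K :=
    (firstTrue_subset_closure hz).trans (closure_minimal hsub hK.isClosed)
  have hcover : firstTrue n ⊆ (⋃ k, block n k) ∪ blockUnion z ∆ K := by
    intro x hx
    by_cases hxz : x ∈ blockUnion z
    · obtain ⟨n', k, -, hxk⟩ := mem_blockUnion.1 hxz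
      obtain rfl := eq_of_mem_firstTrue (block_subset_firstTrue _ _ hxk) hx
      exact Or.inl (mem_iUnion.2 ⟨k, hxk⟩)
    · exact Or.inr (Or.inr ⟨hfirst hx, hxz⟩)
  have hle : (2⁻¹ : ENNReal) ^ (n + 1) ≤ 2⁻¹ ^ (n + 1) * 2⁻¹ := by
    calc (2⁻¹ : ENNReal) ^ (n + 1) = μ (firstTrue n) := by
          rw [firstTrue, ← cylinder_eq_agreeOn, hμ, one_div, ENNReal.inv_pow]
      _ ≤ μ (⋃ k, block n k) + μ (blockUnion z ∆ K) :=
          (measure_mono hcover).trans (measure_union_le _ _)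
      _ ≤ 2⁻¹ ^ (n + 1) * 2⁻¹ := by
          rw [h0, add_zero]
          exact (measure_iUnion_le _).trans (tsum_measure_block_le hμ n)
  refine absurd hle (not_le.2 ?_)
  rw [← div_eq_mul_inv]
  exact ENNReal.half_lt_self (pow_ne_zero _ (by simp)) (ENNReal.pow_ne_top (by simp))

end Measure

end CantorMeasure

/-- **`Π⁰₃`-hardness of the family of (classes of) compact sets in the measure algebra of
the Cantor space.** Let `μ` be the coin-tossing measure on `2^ℕ` and let
`P₃ = {z | ∀n ∃m ∀k ≥ m, z n k = false}`. There is a map `f` from `ℕ×ℕ → Bool` to Borel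
subsets of `2^ℕ` that is continuous into the measure algebra and such that `z ∈ P₃` iff
`f z` is equal mod `μ`-null sets to a compact set. -/
theorem stmt_11 (μ : Measure (ℕ → Bool))
    (hμ : ∀ (x : ℕ → Bool) (n : ℕ), μ (cylinder x n) = 1 / 2 ^ n) :
    ∃ f : (ℕ → ℕ → Bool) → Set (ℕ → Bool),
      (∀ z, MeasurableSet (f z)) ∧
      (∀ z : ℕ → ℕ → Bool, ∀ ε : ℝ, 0 < ε → ∃ N : ℕ, ∀ w : ℕ → ℕ → Bool,
        (∀ i < N, ∀ j < N, w i j = z i j) → μ (f z ∆ f w) ≤ ENNReal.ofReal ε) ∧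
      (∀ z : ℕ → ℕ → Bool,
        (∀ n : ℕ, ∃ m : ℕ, ∀ k ≥ m, z n k = false) ↔
        ∃ K : Set (ℕ → Bool), IsCompact K ∧ μ (f z ∆ K) = 0) := by
  refine ⟨CantorMeasure.blockUnion, fun z => (CantorMeasure.isOpen_blockUnion z).measurableSet,
    fun z ε hε => ?_, fun z => ⟨fun hz => ?_, ?_⟩⟩
  · obtain ⟨N, hN⟩ := CantorMeasure.exists_forall_measure_symmDiff_le hμ (ENNReal.ofReal_pos.2 hε)
    exact ⟨N, hN z⟩
  · obtain ⟨K, hK, hsub⟩ := CantorMeasure.exists_isCompact_of_eventually_false hz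
    exact ⟨K, hK, measure_mono_null hsub (CantorMeasure.measure_singleton_eq_zero hμ _)⟩
  · rintro ⟨K, hK, h0⟩
    by_contra! h
    obtain ⟨n, hn⟩ := h
    exact CantorMeasure.measure_symmDiff_ne_zero hμ (fun m => by simpa using hn m) hK h0
end

section
/- For each n ≥ 1 there exists a bounded spongy subset of ℝⁿ (with respect to Lebesgue measure and Euclidean open balls): a bounded Lebesgue-measurable set S ⊆ ℝⁿ such that no point x ∈ ℝⁿ has density D_S(x) strictly between 0 and 1, while there exists at least one point at which the density of S does not exist. Furthermore S can be taken to be open, and it can also be taken to be closed. -/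
open MeasureTheory Metric Set Filter Topology

/-- The density of a set `A` at a point `x`: the limit, as `ε → 0⁺`, of
`μ(A ∩ B(x,ε))/μ(B(x,ε))`. -/
def HasDensity {X : Type*} [MetricSpace X] [MeasurableSpace X]
    (μ : Measure X) (A : Set X) (x : X) (v : ℝ) : Prop :=
  Tendsto (fun e : ℝ => (μ (A ∩ ball x e)).toReal / (μ (ball x e)).toReal)
    (𝓝[>] (0 : ℝ)) (𝓝 v)

/-- `S` is spongy (for the measure `μ`): there is no point at which the density of `S`
exists and lies strictly between `0` and `1`, but there is a point at which the density
of `S` does not exist. -/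
def IsSpongy {X : Type*} [MetricSpace X] [MeasurableSpace X]
    (μ : Measure X) (S : Set X) : Prop :=
  (∀ (x : X) (v : ℝ), 0 < v → v < 1 → ¬ HasDensity μ S x v) ∧
  (∃ x : X, ¬ ∃ v : ℝ, HasDensity μ S x v)

/-- If `μ (frontier B) = 0`, membership in `B` is locally constant at almost every point. -/
lemma ae_eventually_mem_iff_of_frontier {X : Type*} [TopologicalSpace X] [MeasurableSpace X]
    {μ : Measure X} {B : Set X} (hB : μ (frontier B) = 0) :
    ∀ᵐ y ∂μ, ∀ᶠ z in 𝓝 y, (z ∈ B ↔ y ∈ B) := by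
  filter_upwards [measure_eq_zero_iff_ae_notMem.1 hB] with y hy
  by_cases hyB : y ∈ B
  · have h : B ∈ 𝓝 y := by
      by_contra h
      exact hy ⟨subset_closure hyB, fun h' => h (mem_interior_iff_mem_nhds.1 h')⟩
    filter_upwards [h] with z hz
    simp [hz, hyB]
  · have h : Bᶜ ∈ 𝓝 y := by
      rw [← mem_interior_iff_mem_nhds, interior_compl]
      intro h
      exact hy ⟨h, fun h' => hyB (interior_subset h')⟩
    filter_upwards [h] with z hz
    simp only [mem_compl_iff] at hz
    simp [hz, hyB]

section Germs

lemma IsPreconnected.subset_or_subset_compl_of_disjoint_frontier {X : Type*} [TopologicalSpace X]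
    {I T : Set X} (hI : IsPreconnected I) (h : Disjoint I (frontier T)) : I ⊆ T ∨ I ⊆ Tᶜ := by
  have hcover : I ⊆ interior T ∪ interior Tᶜ := by
    intro u hu
    rw [interior_compl]
    by_contra h'
    simp only [mem_union, mem_compl_iff, not_or, not_not] at h'
    exact Set.disjoint_left.1 h hu ⟨h'.2, h'.1⟩
  have hd : Disjoint (interior T) (interior Tᶜ) :=
    disjoint_compl_right.mono interior_subset interior_subset
  exact (hI.subset_or_subset isOpen_interior isOpen_interior hd hcover).imp
    (fun h => h.trans interior_subset) (fun h => h.trans interior_subset)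

lemma exists_pos_forall_mem_frontier_eq {T : Set ℝ} (hT : (frontier T).Finite) (s : ℝ) :
    ∃ e > 0, ∀ u ∈ frontier T, |u - s| < e → u = s := by
  have hc : (frontier T \ {s})ᶜ ∈ 𝓝 s :=
    (hT.subset sdiff_subset).isClosed.isOpen_compl.mem_nhds (by simp)
  obtain ⟨e, he, hsub⟩ := Metric.mem_nhds_iff.1 hc
  exact ⟨e, he, fun u hu hus => by_contra fun hne => hsub hus ⟨hu, hne⟩⟩

/-- A subset of the line with finite frontier is, on an interval to the right of each point,
either full or empty. -/
lemma eventually_right_mem_or_notMem {T : Set ℝ} (hT : (frontier T).Finite) (s : ℝ) :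
    (∀ᶠ u in 𝓝[>] s, u ∈ T) ∨ (∀ᶠ u in 𝓝[>] s, u ∉ T) := by
  obtain ⟨e, he, hs⟩ := exists_pos_forall_mem_frontier_eq hT s
  have hI : Ioo s (s + e) ∈ 𝓝[>] s := Ioo_mem_nhdsGT (by linarith)
  have hd : Disjoint (Ioo s (s + e)) (frontier T) := Set.disjoint_left.2 fun u hu hu' =>
    hu.1.ne' (hs u hu' (abs_lt.2 ⟨by linarith [hu.1], by linarith [hu.2]⟩))
  exact (isPreconnected_Ioo.subset_or_subset_compl_of_disjoint_frontier hd).imp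
    (mem_of_superset hI) (mem_of_superset hI)

/-- A subset of the line with finite frontier is, on an interval to the left of each point,
either full or empty. -/
lemma eventually_left_mem_or_notMem {T : Set ℝ} (hT : (frontier T).Finite) (s : ℝ) :
    (∀ᶠ u in 𝓝[<] s, u ∈ T) ∨ (∀ᶠ u in 𝓝[<] s, u ∉ T) := by
  obtain ⟨e, he, hs⟩ := exists_pos_forall_mem_frontier_eq hT s
  have hI : Ioo (s - e) s ∈ 𝓝[<] s := Ioo_mem_nhdsLT (by linarith)
  have hd : Disjoint (Ioo (s - e) s) (frontier T) := Set.disjoint_left.2 fun u hu hu' =>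
    hu.2.ne (hs u hu' (abs_lt.2 ⟨by linarith [hu.1], by linarith [hu.2]⟩))
  exact (isPreconnected_Ioo.subset_or_subset_compl_of_disjoint_frontier hd).imp
    (mem_of_superset hI) (mem_of_superset hI)

lemma finite_frontier_union {S T : Set ℝ} (hS : (frontier S).Finite) (hT : (frontier T).Finite) :
    (frontier (S ∪ T)).Finite :=
  (hS.union hT).subset ((frontier_union_subset S T).trans
    (union_subset_union inter_subset_left inter_subset_right))

lemma finite_frontier_inter {S T : Set ℝ} (hS : (frontier S).Finite) (hT : (frontier T).Finite) :
    (frontier (S ∩ T)).Finite :=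
  (hS.union hT).subset ((frontier_inter_subset S T).trans
    (union_subset_union inter_subset_left inter_subset_right))

lemma finite_frontier_biUnion_Ioo {ι : Type*} {I : Set ι} (hI : I.Finite) (a b : ι → ℝ) :
    (frontier (⋃ i ∈ I, Ioo (a i) (b i))).Finite := by
  induction I, hI using Set.Finite.induction_on with
  | empty => simp
  | insert _ _ h =>
    rw [biUnion_insert]
    refine finite_frontier_union ?_ h
    rename_i i _ _ _
    rcases lt_or_ge (a i) (b i) with hab | hab
    · rw [frontier_Ioo hab]; exact toFinite _
    · simp [Ioo_eq_empty hab.not_gt]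

end Germs

section Shell

variable {E : Type*} [NormedAddCommGroup E]

/-- The radial set of nonzero points whose norm has its logarithm in `T`. -/
def shell (E : Type*) [NormedAddCommGroup E] (T : Set ℝ) : Set E :=
  {x | x ≠ 0 ∧ Real.log ‖x‖ ∈ T}

lemma shell_mono {S T : Set ℝ} (h : S ⊆ T) : shell E S ⊆ shell E T := fun _ hx => ⟨hx.1, h hx.2⟩

lemma continuousAt_log_norm {x : E} (hx : x ≠ 0) :
    ContinuousAt (fun y : E => Real.log ‖y‖) x :=
  continuous_norm.continuousAt.log (norm_ne_zero_iff.2 hx)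

lemma isOpen_shell {T : Set ℝ} (hT : IsOpen T) : IsOpen (shell E T) := by
  rw [isOpen_iff_mem_nhds]
  rintro x ⟨hx, hxT⟩
  filter_upwards [isOpen_ne.mem_nhds hx,
    (continuousAt_log_norm hx).preimage_mem_nhds (hT.mem_nhds hxT)] with y hy hyT
  exact ⟨hy, hyT⟩

lemma measurableSet_shell [MeasurableSpace E] [BorelSpace E] {T : Set ℝ} (hT : MeasurableSet T) :
    MeasurableSet (shell E T) := by
  have h1 : MeasurableSet {x : E | x ≠ 0} := (measurableSet_singleton (0 : E)).compl
  have h2 : Measurable fun y : E => Real.log ‖y‖ := Real.measurable_log.comp measurable_norm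
  exact h1.inter (h2 hT)

lemma frontier_shell_subset (T : Set ℝ) : frontier (shell E T) ⊆ {0} ∪ shell E (frontier T) := by
  intro x hx
  by_cases hx0 : x = 0
  · exact Or.inl hx0
  refine Or.inr ⟨hx0, ?_⟩
  by_contra hf
  by_cases hi : Real.log ‖x‖ ∈ interior T
  · have : shell E (interior T) ∈ 𝓝 x := (isOpen_shell isOpen_interior).mem_nhds ⟨hx0, hi⟩
    exact hx.2 (mem_interior_iff_mem_nhds.2 (mem_of_superset this (shell_mono interior_subset)))
  · have hc : Real.log ‖x‖ ∈ interior Tᶜ := by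
      rw [interior_compl]
      exact fun h => hf ⟨h, hi⟩
    have : shell E (interior Tᶜ) ∈ 𝓝 x := (isOpen_shell isOpen_interior).mem_nhds ⟨hx0, hc⟩
    have h2 : (shell E T)ᶜ ∈ 𝓝 x :=
      mem_of_superset this fun y hy hy' => interior_subset hy.2 hy'.2
    have h3 : x ∈ interior (shell E T)ᶜ := mem_interior_iff_mem_nhds.2 h2
    rw [interior_compl] at h3
    exact h3 hx.1

variable [NormedSpace ℝ E] [MeasurableSpace E] [BorelSpace E] [FiniteDimensional ℝ E]
  [Nontrivial E] (μ : Measure E) [μ.IsAddHaarMeasure]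

lemma measure_shell_of_countable {T : Set ℝ} (hT : T.Countable) : μ (shell E T) = 0 := by
  have h : shell E T ⊆ ⋃ t ∈ T, sphere (0 : E) (Real.exp t) := by
    rintro x ⟨hx, hxT⟩
    refine mem_biUnion hxT ?_
    rw [mem_sphere_zero_iff_norm, Real.exp_log (norm_pos_iff.2 hx)]
  refine measure_mono_null h ((measure_biUnion_null_iff hT).2 fun t _ => ?_)
  exact Measure.addHaar_sphere μ _ _

lemma measure_frontier_shell {T : Set ℝ} (hT : (frontier T).Countable) :
    μ (frontier (shell E T)) = 0 := by
  refine measure_mono_null (frontier_shell_subset T) (measure_union_null ?_ ?_)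
  · exact measure_singleton _
  · exact measure_shell_of_countable μ hT

end Shell

section Density

/-- The proportion of the ball of radius `e` about `x` filled by `A`. -/
noncomputable def ballRatio {X : Type*} [MetricSpace X] [MeasurableSpace X]
    (μ : Measure X) (A : Set X) (x : X) (e : ℝ) : ℝ :=
  μ.real (A ∩ ball x e) / μ.real (ball x e)

lemma hasDensity_iff_tendsto_ballRatio {X : Type*} [MetricSpace X] [MeasurableSpace X]
    {μ : Measure X} {A : Set X} {x : X} {v : ℝ} :
    HasDensity μ A x v ↔ Tendsto (ballRatio μ A x) (𝓝[>] 0) (𝓝 v) := Iff.rfl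

/-- Density is a local notion. -/
lemma HasDensity.congr_of_eventually {X : Type*} [MetricSpace X] [MeasurableSpace X]
    {μ : Measure X} {A B : Set X} {x : X} {v : ℝ} (h : HasDensity μ A x v)
    (hAB : ∀ᶠ y in 𝓝 x, (y ∈ A ↔ y ∈ B)) : HasDensity μ B x v := by
  obtain ⟨r, hr, hsub⟩ := Metric.mem_nhds_iff.1 hAB
  refine Tendsto.congr' ?_ h
  filter_upwards [Ioo_mem_nhdsGT hr] with e he
  have : A ∩ ball x e = B ∩ ball x e := by
    ext y
    simp only [mem_inter_iff, and_congr_left_iff]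
    exact fun hy => hsub (ball_subset_ball he.2.le hy)
  rw [this]

lemma HasDensity.congr_ae {X : Type*} [MetricSpace X] [MeasurableSpace X]
    {μ : Measure X} {A B : Set X} {x : X} {v : ℝ} (h : HasDensity μ A x v)
    (hAB : A =ᵐ[μ] B) : HasDensity μ B x v := by
  refine Tendsto.congr (fun e => ?_) h
  rw [measure_congr (hAB.inter (ae_eq_refl (ball x e)))]

lemma measureReal_ball_pos {X : Type*} [MetricSpace X] [ProperSpace X] [MeasurableSpace X]
    (μ : Measure X) [μ.IsOpenPosMeasure] [IsFiniteMeasureOnCompacts μ] (x : X) {e : ℝ}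
    (he : 0 < e) : 0 < μ.real (ball x e) :=
  ENNReal.toReal_pos (measure_ball_pos μ x he).ne' measure_ball_lt_top.ne

variable {E : Type*} [NormedAddCommGroup E] [MeasurableSpace E] [BorelSpace E]

section Normed

variable [NormedSpace ℝ E] [FiniteDimensional ℝ E] (μ : Measure E) [μ.IsAddHaarMeasure]

lemma ballRatio_eq_rescaled (A : Set E) (x : E) {e : ℝ} (he : 0 < e) :
    ballRatio μ A x e = μ.real {z | z ∈ ball (0 : E) 1 ∧ x + e • z ∈ A} / μ.real (ball 0 1) := by
  have key : ∀ A : Set E, μ.real {z | z ∈ ball (0 : E) 1 ∧ x + e • z ∈ A} =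
      |(e ^ Module.finrank ℝ E)⁻¹| * μ.real (A ∩ ball x e) := by
    intro A
    have h1 : {z | z ∈ ball (0 : E) 1 ∧ x + e • z ∈ A} =
        (e • ·) ⁻¹' ((x + ·) ⁻¹' (A ∩ ball x e)) := by
      ext z
      simp only [mem_ofPred_eq, mem_preimage, mem_inter_iff, mem_ball, dist_zero_right,
        dist_self_add_left, norm_smul, Real.norm_eq_abs, abs_of_pos he]
      rw [and_comm, mul_lt_iff_lt_one_right he]
    rw [h1, measureReal_def, Measure.addHaar_preimage_smul μ he.ne', measure_preimage_add,
      ENNReal.toReal_mul, ENNReal.toReal_ofReal (abs_nonneg _), measureReal_def]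
  have h2 : μ.real (ball (0 : E) 1) = |(e ^ Module.finrank ℝ E)⁻¹| * μ.real (ball x e) := by
    have h3 : {z | z ∈ ball (0 : E) 1 ∧ x + e • z ∈ univ} = ball (0 : E) 1 := by
      ext z
      simp
    rw [← h3, key, univ_inter]
  rw [key, h2, ballRatio, mul_div_mul_left]
  positivity

end Normed

variable [InnerProductSpace ℝ E] [FiniteDimensional ℝ E] (μ : Measure E) [μ.IsAddHaarMeasure]

lemma measure_setOf_inner_eq_zero {x : E} (hx : x ≠ 0) : μ {z : E | inner ℝ x z = 0} = 0 := by
  have h := Measure.addHaar_submodule μ (ℝ ∙ x)ᗮ (by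
    intro h
    have : x ∈ (ℝ ∙ x)ᗮ := h ▸ Submodule.mem_top
    rw [Submodule.mem_orthogonal_singleton_iff_inner_right] at this
    exact hx (inner_self_eq_zero.1 this))
  convert h using 2
  ext z
  simp [Submodule.mem_orthogonal_singleton_iff_inner_right]

/-- The two halves of the unit ball cut by a hyperplane through the centre have equal measure. -/
lemma measureReal_half_ball {x : E} (hx : x ≠ 0) :
    μ.real (ball (0 : E) 1 ∩ {z | 0 < inner ℝ x z}) = μ.real (ball (0 : E) 1) / 2 ∧
    μ.real (ball (0 : E) 1 ∩ {z | inner ℝ x z < 0}) = μ.real (ball (0 : E) 1) / 2 := by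
  have hcont : Continuous fun z : E => inner ℝ x z := by fun_prop
  have hpos : MeasurableSet {z : E | 0 < inner ℝ x z} := (isOpen_lt continuous_const hcont).measurableSet
  have hneg : MeasurableSet {z : E | inner ℝ x z < 0} := (isOpen_lt hcont continuous_const).measurableSet
  have hsymm : μ.real (ball (0 : E) 1 ∩ {z | inner ℝ x z < 0}) =
      μ.real (ball (0 : E) 1 ∩ {z | 0 < inner ℝ x z}) := by
    rw [measureReal_def, measureReal_def, ← Measure.measure_preimage_neg]
    congr 2
    ext z
    simp
  have hsum : μ.real (ball (0 : E) 1) = μ.real (ball (0 : E) 1 ∩ {z | 0 < inner ℝ x z}) +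
      μ.real (ball (0 : E) 1 ∩ {z | inner ℝ x z < 0}) := by
    rw [← measureReal_union _ (measurableSet_ball.inter hneg)]
    · refine measureReal_congr ?_
      filter_upwards [measure_eq_zero_iff_ae_notMem.1 (measure_setOf_inner_eq_zero μ hx)] with z hz
      have : inner ℝ x z ≠ 0 := hz
      refine propext ⟨fun h => ?_, ?_⟩
      · rcases lt_or_gt_of_ne this with h' | h'
        · exact Or.inr ⟨h, h'⟩
        · exact Or.inl ⟨h, h'⟩
      · rintro (h | h) <;> exact h.1
    · rw [Set.disjoint_left]
      rintro z ⟨_, hz⟩ ⟨_, hz'⟩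
      simp only [mem_ofPred_eq] at hz hz'
      linarith
  constructor <;> linarith

open Classical in
/-- The density of a shell at a nonzero point is the mean of its one-sided radial densities. -/
lemma hasDensity_shell {T : Set ℝ} (hT : MeasurableSet T) {x : E} (hx : x ≠ 0) {a b : Prop}
    (hr : ∀ᶠ s in 𝓝[>] (Real.log ‖x‖), (s ∈ T ↔ a))
    (hl : ∀ᶠ s in 𝓝[<] (Real.log ‖x‖), (s ∈ T ↔ b)) :
    HasDensity μ (shell E T) x ((if a then 1 / 2 else 0) + (if b then 1 / 2 else 0)) := by
  have hcont : Continuous fun z : E => inner ℝ x z := by fun_prop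
  have hpos : MeasurableSet {z : E | 0 < inner ℝ x z} := (isOpen_lt continuous_const hcont).measurableSet
  have hneg : MeasurableSet {z : E | inner ℝ x z < 0} := (isOpen_lt hcont continuous_const).measurableSet
  set P : Set E := if a then ball (0 : E) 1 ∩ {z | 0 < inner ℝ x z} else ∅ with hP
  set N : Set E := if b then ball (0 : E) 1 ∩ {z | inner ℝ x z < 0} else ∅ with hN
  have hPm : MeasurableSet P := by
    rw [hP]; split_ifs
    exacts [measurableSet_ball.inter hpos, MeasurableSet.empty]
  have hNm : MeasurableSet N := by
    rw [hN]; split_ifs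
    exacts [measurableSet_ball.inter hneg, MeasurableSet.empty]
  have hlim : Tendsto (fun e : ℝ => μ {z | z ∈ ball (0 : E) 1 ∧ x + e • z ∈ shell E T}) (𝓝[>] 0)
      (𝓝 (μ (P ∪ N))) := by
    refine tendsto_measure_of_ae_tendsto_indicator _ (hPm.union hNm) ?_
      (measurableSet_ball (x := (0 : E)) (ε := 1)) measure_ball_lt_top.ne
      (Eventually.of_forall fun e z hz => hz.1) ?_
    · intro e
      have : Measurable fun z : E => x + e • z := by fun_prop
      exact measurableSet_ball.inter (this (measurableSet_shell hT))
    · filter_upwards [measure_eq_zero_iff_ae_notMem.1 (measure_setOf_inner_eq_zero μ hx)] with z hz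
      have hz0 : inner ℝ x z ≠ 0 := hz
      have hpath : Tendsto (fun e : ℝ => x + e • z) (𝓝[>] 0) (𝓝 x) := by
        have : Continuous fun e : ℝ => x + e • z := by fun_prop
        have h := this.tendsto 0
        simp only [zero_smul, add_zero] at h
        exact h.mono_left nhdsWithin_le_nhds
      have hne : ∀ᶠ e : ℝ in 𝓝[>] 0, x + e • z ≠ 0 := hpath.eventually (isOpen_ne.mem_nhds hx)
      have hlog : Tendsto (fun e : ℝ => Real.log ‖x + e • z‖) (𝓝[>] 0) (𝓝 (Real.log ‖x‖)) :=
        (continuousAt_log_norm hx).tendsto.comp hpath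
      have hsq : ∀ e : ℝ, ‖x + e • z‖ ^ 2 = ‖x‖ ^ 2 + e * (2 * inner ℝ x z + e * ‖z‖ ^ 2) := by
        intro e
        rw [norm_add_sq_real, norm_smul, inner_smul_right, mul_pow, Real.norm_eq_abs, sq_abs]
        ring
      have hlin : Tendsto (fun e : ℝ => 2 * inner ℝ x z + e * ‖z‖ ^ 2) (𝓝[>] 0)
          (𝓝 (2 * inner ℝ x z)) := by
        have : Continuous fun e : ℝ => 2 * inner ℝ x z + e * ‖z‖ ^ 2 := by fun_prop
        have h := this.tendsto 0
        simp only [zero_mul, add_zero] at h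
        exact h.mono_left nhdsWithin_le_nhds
      rcases lt_or_gt_of_ne hz0 with hlt | hgt
      · have hside : ∀ᶠ e : ℝ in 𝓝[>] 0, Real.log ‖x + e • z‖ ∈ Iio (Real.log ‖x‖) := by
          filter_upwards [hne, hlin.eventually (gt_mem_nhds (show 2 * inner ℝ x z < 0 by linarith)),
            self_mem_nhdsWithin] with e h1 h2 h3
          refine Real.log_lt_log (norm_pos_iff.2 h1) (lt_of_pow_lt_pow_left₀ 2 (norm_nonneg _) ?_)
          rw [hsq]
          have := mul_neg_of_pos_of_neg (show (0 : ℝ) < e from h3) h2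
          linarith
        have hT' := (tendsto_nhdsWithin_iff.2 ⟨hlog, hside⟩).eventually hl
        filter_upwards [hne, hT'] with e h1 h2
        simp only [hP, hN, mem_union, mem_ofPred_eq, shell, h2]
        split_ifs <;> simp_all [not_lt.2 hlt.le]
      · have hside : ∀ᶠ e : ℝ in 𝓝[>] 0, Real.log ‖x + e • z‖ ∈ Ioi (Real.log ‖x‖) := by
          filter_upwards [hne, hlin.eventually (lt_mem_nhds (show 0 < 2 * inner ℝ x z by linarith)),
            self_mem_nhdsWithin] with e h1 h2 h3
          refine Real.log_lt_log (norm_pos_iff.2 hx) (lt_of_pow_lt_pow_left₀ 2 (norm_nonneg _) ?_)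
          rw [hsq]
          have := mul_pos (show (0 : ℝ) < e from h3) h2
          linarith
        have hT' := (tendsto_nhdsWithin_iff.2 ⟨hlog, hside⟩).eventually hr
        filter_upwards [hne, hT'] with e h1 h2
        simp only [hP, hN, mem_union, mem_ofPred_eq, shell, h2]
        split_ifs <;> simp_all [not_lt.2 (le_of_lt hgt)]
  have hb := measureReal_ball_pos μ (0 : E) one_pos
  have hPN : μ (P ∪ N) ≠ ⊤ := by
    refine ((measure_mono ?_).trans_lt (measure_ball_lt_top (μ := μ) (x := (0 : E)) (r := 1))).ne
    rw [hP, hN]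
    split_ifs <;> simp
  have hval : μ.real (P ∪ N) / μ.real (ball (0 : E) 1) =
      (if a then 1 / 2 else 0) + (if b then 1 / 2 else 0) := by
    have hdisj : Disjoint P N := by
      rw [Set.disjoint_left, hP, hN]
      intro z
      split_ifs <;> simp
      intro _ h1 _
      exact h1.le
    rw [measureReal_union hdisj hNm (measure_ne_top_of_subset subset_union_left hPN)
      (measure_ne_top_of_subset subset_union_right hPN), hP, hN, add_div]
    congr 1 <;> split_ifs <;>
      simp [measureReal_half_ball μ hx, div_div_cancel_left' hb.ne']
  rw [hasDensity_iff_tendsto_ballRatio, ← hval]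
  have h2 := ((ENNReal.tendsto_toReal hPN).comp hlim).div_const (μ.real (ball (0 : E) 1))
  refine h2.congr' ?_
  filter_upwards [self_mem_nhdsWithin] with e he
  rw [ballRatio_eq_rescaled μ _ _ he]
  rfl

end Density

section Stripes

/-- Finitely many intervals which occupy the middle third of every period of length `3 / N`
inside `(-1, 1)`. -/
def stripes (N : ℕ) : Set ℝ :=
  ⋃ k ∈ Icc (-(N : ℤ)) N, Ioo ((3 * (k : ℝ) + 1) / N) ((3 * (k : ℝ) + 2) / N)

lemma isOpen_stripes (N : ℕ) : IsOpen (stripes N) :=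
  isOpen_biUnion fun _ _ => isOpen_Ioo

lemma finite_frontier_stripes (N : ℕ) : (frontier (stripes N)).Finite :=
  finite_frontier_biUnion_Ioo (finite_Icc _ _) _ _

lemma floor_emod_three_of_mem_stripes {N : ℕ} (hN : 0 < N) {s : ℝ} (hs : s ∈ stripes N) :
    ⌊s * N⌋ % 3 = 1 := by
  have hN' : (0 : ℝ) < N := Nat.cast_pos.2 hN
  simp only [stripes, mem_iUnion, exists_prop] at hs
  obtain ⟨k, -, h1, h2⟩ := hs
  rw [div_lt_iff₀ hN'] at h1
  rw [lt_div_iff₀ hN'] at h2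
  have : ⌊s * N⌋ = 3 * k + 1 := by
    rw [Int.floor_eq_iff]
    push_cast
    constructor <;> linarith
  omega

lemma mem_stripes_of_floor {N : ℕ} (hN : 0 < N) {s : ℝ} (hs : s ∈ Ioo (-1 : ℝ) 1)
    (hfr : ∀ k : ℤ, s * N ≠ k) (h : ⌊s * N⌋ % 3 = 1) : s ∈ stripes N := by
  have hN' : (0 : ℝ) < N := Nat.cast_pos.2 hN
  have hlow : -(N : ℤ) ≤ ⌊s * N⌋ := by
    rw [Int.le_floor]; push_cast; nlinarith [hs.1]
  have hup : ⌊s * N⌋ < (N : ℤ) := by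
    rw [Int.floor_lt]; push_cast; nlinarith [hs.2]
  have hk : ⌊s * N⌋ = 3 * (⌊s * N⌋ / 3) + 1 := by omega
  have hk' : (⌊s * N⌋ : ℝ) = 3 * ((⌊s * N⌋ / 3 : ℤ) : ℝ) + 1 := by exact_mod_cast hk
  simp only [stripes, mem_iUnion, exists_prop]
  refine ⟨⌊s * N⌋ / 3, ⟨by omega, by omega⟩, ?_, ?_⟩
  · rw [div_lt_iff₀ hN', ← hk']
    exact lt_of_le_of_ne (Int.floor_le _) (hfr _).symm
  · rw [lt_div_iff₀ hN']
    linarith [Int.lt_floor_add_one (s * N)]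

lemma eventually_notMem_stripes {N : ℕ} (hN : 0 < N) : ∀ᶠ s in 𝓝 (0 : ℝ), s ∉ stripes N := by
  have hN' : (0 : ℝ) < N := Nat.cast_pos.2 hN
  have : Ioo (-(1 / N) : ℝ) (1 / N) ∈ 𝓝 (0 : ℝ) :=
    Ioo_mem_nhds (by simpa using hN') (by simpa using hN')
  filter_upwards [this] with s hs hmem
  have h := floor_emod_three_of_mem_stripes hN hmem
  have h1 : -1 < s * N := by
    have := mul_lt_mul_of_pos_right hs.1 hN'
    rwa [neg_mul, one_div_mul_cancel hN'.ne'] at this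
  have h2 : s * N < 1 := by
    have := mul_lt_mul_of_pos_right hs.2 hN'
    rwa [one_div_mul_cancel hN'.ne'] at this
  have h3 : -1 ≤ ⌊s * N⌋ := by rw [Int.le_floor]; push_cast; linarith
  have h4 : ⌊s * N⌋ < 1 := by rw [Int.floor_lt]; push_cast; linarith
  omega

end Stripes

section WeakLimit

variable {E : Type*} [NormedAddCommGroup E] [NormedSpace ℝ E] [MeasurableSpace E] [BorelSpace E]
  [FiniteDimensional ℝ E] (μ : Measure E) [μ.IsAddHaarMeasure]

/-- Small dilations move a bounded set with null frontier by a set of small measure. -/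
lemma tendsto_measure_symmDiff_smul {B : Set E} (hB : MeasurableSet B)
    (hbd : Bornology.IsBounded B) (hfr : μ (frontier B) = 0) {c : ℕ → ℝ}
    (hc : Tendsto c atTop (𝓝 1)) :
    Tendsto (fun N => μ (symmDiff ((c N • ·) ⁻¹' B) B)) atTop (𝓝 0) := by
  obtain ⟨R, hR, hBR⟩ := hbd.exists_pos_norm_le
  rw [← measure_empty (μ := μ)]
  refine tendsto_measure_of_ae_tendsto_indicator _ MeasurableSet.empty ?_
    (measurableSet_closedBall (x := (0 : E)) (ε := 2 * R)) measure_closedBall_lt_top.ne ?_ ?_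
  · intro N
    exact ((measurable_const_smul (c N)) hB).symmDiff hB
  · filter_upwards [hc.eventually (lt_mem_nhds (show (1 / 2 : ℝ) < 1 by norm_num))] with N hN z hz
    rw [mem_closedBall_zero_iff]
    rcases hz with hz | hz
    · have h := hBR _ hz.1
      simp only [norm_smul, Real.norm_eq_abs] at h
      rw [abs_of_pos (by linarith)] at h
      nlinarith [norm_nonneg z]
    · linarith [hBR _ hz.1]
  · filter_upwards [ae_eventually_mem_iff_of_frontier hfr] with y hy
    have h1 : Tendsto (fun N => c N • y) atTop (𝓝 y) := by
      simpa using hc.smul_const y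
    filter_upwards [h1.eventually hy] with N hN
    simp only [mem_symmDiff, mem_preimage, hN, mem_empty_iff_false]
    tauto

lemma abs_measureReal_inter_sub_le {X : Type*} [MeasurableSpace X] {μ : Measure X} {B B' : Set X}
    (hB : μ B ≠ ⊤) (hB' : μ B' ≠ ⊤) (Q : Set X) :
    |μ.real (B' ∩ Q) - μ.real (B ∩ Q)| ≤ μ.real (symmDiff B' B) := by
  have hs : μ (symmDiff B' B) ≠ ⊤ :=
    measure_ne_top_of_subset (symmDiff_le_sup (a := B') (b := B))
      (measure_union_ne_top hB' hB)
  have key : ∀ {C D : Set X}, μ C ≠ ⊤ → μ D ≠ ⊤ → μ (symmDiff C D) ≠ ⊤ →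
      μ.real (C ∩ Q) ≤ μ.real (D ∩ Q) + μ.real (symmDiff C D) := by
    intro C D hC hD hCD
    refine (measureReal_mono ?_ (measure_union_ne_top
      (measure_ne_top_of_subset inter_subset_left hD) hCD)).trans (measureReal_union_le _ _)
    rintro z ⟨hz, hq⟩
    by_cases hD' : z ∈ D
    · exact Or.inl ⟨hD', hq⟩
    · exact Or.inr (Or.inl ⟨hz, hD'⟩)
  rw [abs_le]
  have h1 := key hB' hB hs
  have h2 := key hB hB' (by rwa [symmDiff_comm])
  rw [symmDiff_comm] at h2
  constructor <;> linarith

lemma tendsto_measureReal_shell_shift_sub {B : Set E} (hB : MeasurableSet B)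
    (hbd : Bornology.IsBounded B) (hfr : μ (frontier B) = 0) {r i : ℤ}
    (hri : ∀ m : ℤ, m % 3 = r ↔ (m + i) % 3 = 1) :
    Tendsto (fun N : ℕ => μ.real (B ∩ shell E {s | ⌊s * N⌋ % 3 = r}) -
      μ.real (B ∩ shell E {s | ⌊s * N⌋ % 3 = 1})) atTop (𝓝 0) := by
  set c : ℕ → ℝ := fun N => Real.exp (i / N) with hcdef
  have hc0 : ∀ N, c N ≠ 0 := fun N => (Real.exp_pos _).ne'
  have hc : Tendsto c atTop (𝓝 1) := by
    have := (Real.continuous_exp.tendsto 0).comp (tendsto_const_div_atTop_nhds_zero_nat (i : ℝ))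
    simpa [hcdef, Function.comp_def] using this
  have hcinv : Tendsto (fun N => (c N)⁻¹) atTop (𝓝 1) := by simpa using hc.inv₀ one_ne_zero
  have hκ : Tendsto (fun N => |(c N ^ Module.finrank ℝ E)⁻¹|) atTop (𝓝 1) := by
    simpa using ((hc.pow (Module.finrank ℝ E)).inv₀ (by simp)).abs
  have hBfin : μ B ≠ ⊤ := hbd.measure_lt_top.ne
  set b : ℕ → ℝ := fun N => μ.real (((c N)⁻¹ • ·) ⁻¹' B ∩ shell E {s | ⌊s * N⌋ % 3 = 1}) with hb
  set a : ℕ → ℝ := fun N => μ.real (B ∩ shell E {s | ⌊s * N⌋ % 3 = 1}) with ha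
  have hba : Tendsto (fun N => b N - a N) atTop (𝓝 0) := by
    have h1 := (ENNReal.tendsto_toReal ENNReal.zero_ne_top).comp
      (tendsto_measure_symmDiff_smul μ hB hbd hfr hcinv)
    refine squeeze_zero_norm (fun N => ?_) h1
    rw [Real.norm_eq_abs]
    refine abs_measureReal_inter_sub_le hBfin ?_ _
    rw [Measure.addHaar_preimage_smul μ (inv_ne_zero (hc0 N))]
    exact ENNReal.mul_ne_top ENNReal.ofReal_ne_top hBfin
  have hleft : ∀ᶠ N : ℕ in atTop, μ.real (B ∩ shell E {s | ⌊s * N⌋ % 3 = r}) =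
      |(c N ^ Module.finrank ℝ E)⁻¹| * b N := by
    filter_upwards [eventually_gt_atTop 0] with N hN
    have hN' : (N : ℝ) ≠ 0 := Nat.cast_ne_zero.2 hN.ne'
    have h1 : B ∩ shell E {s | ⌊s * N⌋ % 3 = r} =
        (c N • ·) ⁻¹' (((c N)⁻¹ • ·) ⁻¹' B ∩ shell E {s | ⌊s * N⌋ % 3 = 1}) := by
      ext x
      simp only [mem_inter_iff, mem_preimage, inv_smul_smul₀ (hc0 N), shell, mem_ofPred_eq,
        smul_ne_zero_iff, hc0 N, true_and, ne_eq, not_false_eq_true]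
      refine and_congr_right fun _ => and_congr_right fun hx => ?_
      rw [norm_smul, Real.log_mul (norm_ne_zero_iff.2 (hc0 N)) (norm_ne_zero_iff.2 hx),
        Real.norm_of_nonneg (Real.exp_pos _).le, Real.log_exp, add_mul, div_mul_cancel₀ _ hN',
        Int.floor_intCast_add, add_comm, hri]
    rw [h1, measureReal_def, Measure.addHaar_preimage_smul μ (hc0 N), ENNReal.toReal_mul,
      ENNReal.toReal_ofReal (abs_nonneg _)]
    rfl
  have hbound : ∀ N, |a N| ≤ μ.real B := fun N => by
    rw [abs_of_nonneg measureReal_nonneg]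
    exact measureReal_mono inter_subset_left hBfin
  have h3 : Tendsto (fun N => (|(c N ^ Module.finrank ℝ E)⁻¹| - 1) * a N) atTop (𝓝 0) := by
    have h4 : Tendsto (fun N => (|(c N ^ Module.finrank ℝ E)⁻¹| - 1)) atTop (𝓝 0) := by
      simpa using hκ.sub_const 1
    exact h4.zero_mul_isBoundedUnder_le (isBoundedUnder_of ⟨_, hbound⟩)
  have h5 := (hκ.mul hba).add h3
  simp only [mul_zero, add_zero] at h5
  refine h5.congr' ?_
  filter_upwards [hleft] with N hN
  rw [hN]
  ring

variable [Nontrivial E]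

/-- The shells over `stripes N` fill, in the limit, a third of every reasonable set. -/
lemma tendsto_measureReal_inter_shell_stripes {B : Set E} (hB : MeasurableSet B)
    (hbd : Bornology.IsBounded B) (hfr : μ (frontier B) = 0) (hBs : B ⊆ shell E (Ioo (-1) 1)) :
    Tendsto (fun N : ℕ => μ.real (B ∩ shell E (stripes N))) atTop (𝓝 (μ.real B / 3)) := by
  have hBfin : μ B ≠ ⊤ := hbd.measure_lt_top.ne
  have h0 := tendsto_measureReal_shell_shift_sub μ hB hbd hfr (r := 0) (i := 1) (by omega)
  have h2 := tendsto_measureReal_shell_shift_sub μ hB hbd hfr (r := 2) (i := -1) (by omega)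
  have hmeas : ∀ (N : ℕ) (r : ℤ), MeasurableSet (B ∩ shell E {s | ⌊s * N⌋ % 3 = r}) := by
    intro N r
    refine hB.inter (measurableSet_shell ?_)
    have h1 : Measurable fun s : ℝ => ⌊s * N⌋ := Int.measurable_floor.comp (measurable_id.mul_const _)
    exact h1 (MeasurableSet.of_discrete (s := {m : ℤ | m % 3 = r}))
  have hsum : ∀ N : ℕ, μ.real B = μ.real (B ∩ shell E {s | ⌊s * N⌋ % 3 = 0}) +
      μ.real (B ∩ shell E {s | ⌊s * N⌋ % 3 = 1}) +
      μ.real (B ∩ shell E {s | ⌊s * N⌋ % 3 = 2}) := by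
    intro N
    have hfin : ∀ r : ℤ, μ (B ∩ shell E {s | ⌊s * N⌋ % 3 = r}) ≠ ⊤ := fun r =>
      measure_ne_top_of_subset inter_subset_left hBfin
    rw [← measureReal_union ?_ (hmeas N 1) (hfin 0) (hfin 1),
      ← measureReal_union ?_ (hmeas N 2) (measure_union_ne_top (hfin 0) (hfin 1)) (hfin 2)]
    · congr 1
      ext x
      simp only [mem_union, mem_inter_iff, shell, mem_ofPred_eq]
      have hx : x ∈ B → x ≠ 0 := fun h => (hBs h).1
      have hm : ⌊Real.log ‖x‖ * N⌋ % 3 = 0 ∨ ⌊Real.log ‖x‖ * N⌋ % 3 = 1 ∨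
        ⌊Real.log ‖x‖ * N⌋ % 3 = 2 := by omega
      tauto
    · rw [Set.disjoint_left]
      rintro x (⟨-, -, h⟩ | ⟨-, -, h⟩) ⟨-, -, h'⟩ <;> simp only [mem_ofPred_eq] at h h' <;> omega
    · rw [Set.disjoint_left]
      rintro x ⟨-, -, h⟩ ⟨-, -, h'⟩
      simp only [mem_ofPred_eq] at h h'
      omega
  have h1 : Tendsto (fun N : ℕ => μ.real (B ∩ shell E {s | ⌊s * N⌋ % 3 = 1})) atTop
      (𝓝 (μ.real B / 3)) := by
    have h := ((h0.add h2).const_sub (μ.real B)).div_const 3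
    simp only [add_zero, sub_zero] at h
    refine h.congr fun N => ?_
    rw [hsum N]
    ring
  refine h1.congr' ?_
  filter_upwards [eventually_gt_atTop 0] with N hN
  have hN' : (N : ℝ) ≠ 0 := Nat.cast_ne_zero.2 hN.ne'
  have hnull : μ (shell E (range fun k : ℤ => (k : ℝ) / N)) = 0 :=
    measure_shell_of_countable μ (countable_range _)
  refine measureReal_congr ?_
  filter_upwards [measure_eq_zero_iff_ae_notMem.1 hnull] with x hx
  refine propext (and_congr_right fun hxB => and_congr_right fun hx0 => ?_)
  refine ⟨fun h => mem_stripes_of_floor hN (hBs hxB).2 (fun k hk => hx ⟨hx0, k, ?_⟩) h,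
    floor_emod_three_of_mem_stripes hN⟩
  simp only [← hk]
  field_simp

end WeakLimit

section Oscillation

variable {E : Type*} [NormedAddCommGroup E] [MeasurableSpace E] [BorelSpace E] (μ : Measure E)
  [μ.IsAddHaarMeasure]

lemma ballRatio_eq_div_center (A : Set E) (x : E) (e : ℝ) :
    ballRatio μ A x e = μ.real (ball x e ∩ A) / μ.real (ball (0 : E) e) := by
  rw [ballRatio, Measure.addHaar_real_ball_center, inter_comm]

variable [NormedSpace ℝ E] [FiniteDimensional ℝ E] [Nontrivial E]

/-- Ball averages at a fixed scale are continuous in the centre, uniformly in the set. -/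
lemma eventually_abs_ballRatio_sub_le (x : E) {e t : ℝ} (he : 0 < e) (ht : 0 < t) :
    ∀ᶠ y in 𝓝 x, ∀ A : Set E, |ballRatio μ A y e - ballRatio μ A x e| ≤ t := by
  have hV := measureReal_ball_pos μ (0 : E) he
  have hlim : Tendsto (fun y => μ (symmDiff (ball y e) (ball x e))) (𝓝 x) (𝓝 0) := by
    rw [← measure_empty (μ := μ)]
    refine tendsto_measure_of_ae_tendsto_indicator _ MeasurableSet.empty
      (fun y => measurableSet_ball.symmDiff measurableSet_ball)
      (measurableSet_ball (x := x) (ε := e + 1)) measure_ball_lt_top.ne ?_ ?_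
    · filter_upwards [ball_mem_nhds x one_pos] with y hy z hz
      rcases hz with hz | hz
      · have h1 := mem_ball.1 hz.1
        have h2 := mem_ball.1 hy
        exact mem_ball.2 (by linarith [dist_triangle z y x])
      · exact ball_subset_ball (by linarith) hz.1
    · filter_upwards [measure_eq_zero_iff_ae_notMem.1 (Measure.addHaar_sphere μ x e)] with z hz
      have hz' : dist z x ≠ e := hz
      have hcont : Tendsto (fun y => dist z y) (𝓝 x) (𝓝 (dist z x)) :=
        (continuous_const.dist continuous_id).tendsto x
      rcases lt_or_gt_of_ne hz' with h | h
      · filter_upwards [hcont.eventually (gt_mem_nhds h)] with y hy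
        simp [mem_symmDiff, hy, h]
      · filter_upwards [hcont.eventually (lt_mem_nhds h)] with y hy
        simp [mem_symmDiff, not_lt.2 hy.le, not_lt.2 (le_of_lt h)]
  have hreal := (ENNReal.tendsto_toReal ENNReal.zero_ne_top).comp hlim
  filter_upwards [hreal.eventually (gt_mem_nhds (show (0 : ENNReal).toReal < t * μ.real (ball (0 : E) e)
    by rw [ENNReal.toReal_zero]; positivity))] with y hy A
  rw [ballRatio_eq_div_center, ballRatio_eq_div_center, ← sub_div, abs_div, abs_of_pos hV,
    div_le_iff₀ hV]
  exact (abs_measureReal_inter_sub_le measure_ball_lt_top.ne measure_ball_lt_top.ne A).trans hy.le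

/-- Ball averages at a fixed scale change little when the centre moves a little and the set
grows by a set of small measure. -/
lemma exists_eventually_abs_ballRatio_sub_le (A : Set E) (x : E) {e t : ℝ} (he : 0 < e)
    (ht : 0 < t) : ∃ σ : ℝ, 0 < σ ∧ ∀ᶠ y in 𝓝 x, ∀ A' : Set E, A ⊆ A' →
      μ (A' \ A) ≤ ENNReal.ofReal σ → |ballRatio μ A' y e - ballRatio μ A x e| ≤ t := by
  have hV := measureReal_ball_pos μ (0 : E) he
  refine ⟨t / 2 * μ.real (ball (0 : E) e), by positivity, ?_⟩
  filter_upwards [eventually_abs_ballRatio_sub_le μ x he (half_pos ht)] with y hy A' hA hσ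
  have h1 : |ballRatio μ A' x e - ballRatio μ A x e| ≤ t / 2 := by
    rw [ballRatio_eq_div_center, ballRatio_eq_div_center, ← sub_div, abs_div, abs_of_pos hV,
      div_le_iff₀ hV]
    have h2 : μ.real (ball x e ∩ A) ≤ μ.real (ball x e ∩ A') :=
      measureReal_mono (inter_subset_inter_right _ hA)
        (measure_ne_top_of_subset inter_subset_left measure_ball_lt_top.ne)
    have hfin : μ (A' \ A) ≠ ⊤ := (hσ.trans_lt ENNReal.ofReal_lt_top).ne
    have h3 : μ.real (ball x e ∩ A') ≤ μ.real (ball x e ∩ A) + μ.real (A' \ A) := by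
      refine (measureReal_mono ?_ (measure_union_ne_top
        (measure_ne_top_of_subset inter_subset_left measure_ball_lt_top.ne) hfin)).trans
        (measureReal_union_le _ _)
      rintro z ⟨hz, hz'⟩
      by_cases h : z ∈ A
      · exact Or.inl ⟨hz, h⟩
      · exact Or.inr ⟨hz', h⟩
    have h4 : μ.real (A' \ A) ≤ t / 2 * μ.real (ball (0 : E) e) :=
      ENNReal.toReal_le_of_le_ofReal (by positivity) hσ
    rw [abs_of_nonneg (by linarith)]
    linarith
  have h5 := hy A'
  rw [abs_le] at *
  constructor <;> linarith

/-- At some scales below `η` the ball averages of `A` about `x` are within `η` of `0` or `1`,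
or else differ by more than `1 / 20`. -/
def Oscillates {X : Type*} [MetricSpace X] [MeasurableSpace X]
    (μ : Measure X) (A : Set X) (η : ℝ) (x : X) : Prop :=
  ∃ e ∈ Ioo 0 η, ∃ e' ∈ Ioo 0 η, ballRatio μ A x e < η ∨ 1 - η < ballRatio μ A x e ∨
    1 / 20 < |ballRatio μ A x e - ballRatio μ A x e'|

lemma not_hasDensity_of_oscillates {X : Type*} [MetricSpace X] [MeasurableSpace X]
    {μ : Measure X} {A : Set X} {x : X} (h : ∀ k : ℕ, Oscillates μ A (1 / (k + 1)) x) {v : ℝ}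
    (h0 : 0 < v) (h1 : v < 1) : ¬ HasDensity μ A x v := by
  intro hv
  rw [hasDensity_iff_tendsto_ballRatio] at hv
  set t := min (1 / 50) (min (v / 2) ((1 - v) / 2)) with ht
  have htpos : 0 < t := by
    refine lt_min (by norm_num) (lt_min ?_ ?_) <;> linarith
  have ht1 : t ≤ 1 / 50 := min_le_left _ _
  have ht2 : t ≤ v / 2 := (min_le_right _ _).trans (min_le_left _ _)
  have ht3 : t ≤ (1 - v) / 2 := (min_le_right _ _).trans (min_le_right _ _)
  have hev := hv.eventually (Metric.ball_mem_nhds v htpos)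
  obtain ⟨δ, hδ, hsub⟩ := mem_nhdsGT_iff_exists_Ioo_subset.1 hev
  have hδ' : (0 : ℝ) < δ := hδ
  obtain ⟨k, hk⟩ := exists_nat_one_div_lt (lt_min hδ' htpos)
  have hk1 := hk.trans_le (min_le_left _ _)
  have hk2 := hk.trans_le (min_le_right _ _)
  obtain ⟨e, he, e', he', hcase⟩ := h k
  have h2 : |ballRatio μ A x e - v| < t := hsub ⟨he.1, he.2.trans hk1⟩
  have h3 : |ballRatio μ A x e' - v| < t := hsub ⟨he'.1, he'.2.trans hk1⟩
  rw [abs_lt] at h2 h3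
  rcases hcase with hc | hc | hc
  · linarith
  · linarith
  · rw [lt_abs] at hc
    rcases hc with hc | hc <;> linarith

/-- Oscillation on a compact set survives the addition of a set of small measure. -/
lemma exists_oscillates_of_measure_sdiff_le {K : Set E} (hK : IsCompact K) {A : Set E} {η : ℝ}
    (h : ∀ x ∈ K, Oscillates μ A η x) : ∃ σ : ℝ, 0 < σ ∧ ∀ A' : Set E, A ⊆ A' →
      μ (A' \ A) ≤ ENNReal.ofReal σ → ∀ x ∈ K, Oscillates μ A' η x := by
  refine hK.induction_on (p := fun s => ∃ σ : ℝ, 0 < σ ∧ ∀ A' : Set E, A ⊆ A' →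
    μ (A' \ A) ≤ ENNReal.ofReal σ → ∀ x ∈ s, Oscillates μ A' η x) ?_ ?_ ?_ ?_
  · exact ⟨1, one_pos, by simp⟩
  · rintro s s' hss ⟨σ, hσ, hs⟩
    exact ⟨σ, hσ, fun A' hA hμ x hx => hs A' hA hμ x (hss hx)⟩
  · rintro s s' ⟨σ, hσ, hs⟩ ⟨σ', hσ', hs'⟩
    refine ⟨min σ σ', lt_min hσ hσ', fun A' hA hμ x hx => ?_⟩
    rcases hx with hx | hx
    · exact hs A' hA (hμ.trans (ENNReal.ofReal_le_ofReal (min_le_left _ _))) x hx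
    · exact hs' A' hA (hμ.trans (ENNReal.ofReal_le_ofReal (min_le_right _ _))) x hx
  · intro x hx
    obtain ⟨e, he, e', he', hcase⟩ := h x hx
    obtain ⟨t, ht, htc⟩ : ∃ t : ℝ, 0 < t ∧ ∀ p p' : ℝ, |p - ballRatio μ A x e| ≤ t →
        |p' - ballRatio μ A x e'| ≤ t → p < η ∨ 1 - η < p ∨ 1 / 20 < |p - p'| := by
      rcases hcase with hc | hc | hc
      · refine ⟨(η - ballRatio μ A x e) / 2, by linarith, fun p p' hp hp' => Or.inl ?_⟩
        rw [abs_le] at hp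
        linarith
      · refine ⟨(ballRatio μ A x e - (1 - η)) / 2, by linarith, fun p p' hp hp' =>
          Or.inr (Or.inl ?_)⟩
        rw [abs_le] at hp
        linarith
      · refine ⟨(|ballRatio μ A x e - ballRatio μ A x e'| - 1 / 20) / 4, by linarith,
          fun p p' hp hp' => Or.inr (Or.inr ?_)⟩
        have h1 := abs_sub_abs_le_abs_sub (ballRatio μ A x e - ballRatio μ A x e') (p - p')
        have h2 : |ballRatio μ A x e - ballRatio μ A x e' - (p - p')| ≤
            |p - ballRatio μ A x e| + |p' - ballRatio μ A x e'| := by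
          have := abs_sub (p' - ballRatio μ A x e') (p - ballRatio μ A x e)
          rw [show ballRatio μ A x e - ballRatio μ A x e' - (p - p') =
            (p' - ballRatio μ A x e') - (p - ballRatio μ A x e) by ring]
          linarith
        linarith
    obtain ⟨σ, hσ, hev⟩ := exists_eventually_abs_ballRatio_sub_le μ A x he.1 ht
    obtain ⟨σ', hσ', hev'⟩ := exists_eventually_abs_ballRatio_sub_le μ A x he'.1 ht
    refine ⟨_, mem_nhdsWithin_of_mem_nhds (hev.and hev'), min σ σ', lt_min hσ hσ',
      fun A' hA hμ y hy => ⟨e, he, e', he', htc _ _ ?_ ?_⟩⟩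
    · exact hy.1 A' hA (hμ.trans (ENNReal.ofReal_le_ofReal (min_le_left _ _)))
    · exact hy.2 A' hA (hμ.trans (ENNReal.ofReal_le_ofReal (min_le_right _ _)))

end Oscillation

section Construction

variable {E : Type*} [NormedAddCommGroup E] [InnerProductSpace ℝ E] [MeasurableSpace E]
  [BorelSpace E] [FiniteDimensional ℝ E] (μ : Measure E) [μ.IsAddHaarMeasure]

lemma hasDensity_shell_one {T : Set ℝ} (hT : MeasurableSet T) {x : E} (hx : x ≠ 0)
    (h : T ∈ 𝓝 (Real.log ‖x‖)) : HasDensity μ (shell E T) x 1 := by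
  have h' : ∀ᶠ s in 𝓝 (Real.log ‖x‖), (s ∈ T ↔ True) := by
    filter_upwards [h] with s hs
    simpa using hs
  have := hasDensity_shell μ hT hx (h'.filter_mono nhdsWithin_le_nhds)
    (h'.filter_mono nhdsWithin_le_nhds)
  norm_num at this
  exact this

lemma hasDensity_shell_zero {T : Set ℝ} (hT : MeasurableSet T) {x : E} (hx : x ≠ 0)
    (h : Tᶜ ∈ 𝓝 (Real.log ‖x‖)) : HasDensity μ (shell E T) x 0 := by
  have h' : ∀ᶠ s in 𝓝 (Real.log ‖x‖), (s ∈ T ↔ False) := by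
    filter_upwards [h] with s hs
    simpa using hs
  have := hasDensity_shell μ hT hx (h'.filter_mono nhdsWithin_le_nhds)
    (h'.filter_mono nhdsWithin_le_nhds)
  norm_num at this
  exact this

/-- A shell over a set with finite frontier has density `0`, `1 / 2` or `1` at nonzero points. -/
lemma exists_hasDensity_shell {T : Set ℝ} (hT : MeasurableSet T) (hfr : (frontier T).Finite)
    {x : E} (hx : x ≠ 0) :
    ∃ v : ℝ, (v = 0 ∨ v = 1 / 2 ∨ v = 1) ∧ HasDensity μ (shell E T) x v := by
  have hr : ∃ a : Prop, ∀ᶠ s in 𝓝[>] (Real.log ‖x‖), (s ∈ T ↔ a) := by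
    rcases eventually_right_mem_or_notMem hfr (Real.log ‖x‖) with h | h
    · exact ⟨True, by simpa using h⟩
    · exact ⟨False, by simpa using h⟩
  have hl : ∃ b : Prop, ∀ᶠ s in 𝓝[<] (Real.log ‖x‖), (s ∈ T ↔ b) := by
    rcases eventually_left_mem_or_notMem hfr (Real.log ‖x‖) with h | h
    · exact ⟨True, by simpa using h⟩
    · exact ⟨False, by simpa using h⟩
  obtain ⟨a, ha⟩ := hr
  obtain ⟨b, hb⟩ := hl
  refine ⟨_, ?_, hasDensity_shell μ hT hx ha hb⟩
  split_ifs <;> norm_num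

/-- The approximating profiles: open sets with finite frontier inside `(-1, 1)` which contain `T₀`,
differ from it only inside `(-1, 1)`, and coincide with it near `0`. -/
structure IsProfile (T₀ T : Set ℝ) : Prop where
  isOpen : IsOpen T
  finite_frontier : (frontier T).Finite
  frontier_subset : frontier T ⊆ Ioo (-1) 1
  base_subset : T₀ ⊆ T
  subset_base_union : T ⊆ T₀ ∪ Ioo (-1) 1
  eventually_mem_iff : ∀ᶠ s in 𝓝 (0 : ℝ), (s ∈ T ↔ s ∈ T₀)

lemma IsProfile.union_stripes_inter {T₀ T U : Set ℝ} (hT : IsProfile T₀ T) (hU : IsOpen U)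
    (hUfr : (frontier U).Finite) (hUc : closure U ⊆ Ioo (-1) 1) {N : ℕ} (hN : 0 < N) :
    IsProfile T₀ (T ∪ (stripes N ∩ U)) where
  isOpen := hT.isOpen.union ((isOpen_stripes N).inter hU)
  finite_frontier := finite_frontier_union hT.finite_frontier
    (finite_frontier_inter (finite_frontier_stripes N) hUfr)
  frontier_subset := by
    refine (frontier_union_subset _ _).trans (union_subset
      (inter_subset_left.trans hT.frontier_subset) (inter_subset_right.trans ?_))
    exact frontier_subset_closure.trans ((closure_mono inter_subset_right).trans hUc)
  base_subset := hT.base_subset.trans subset_union_left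
  subset_base_union := union_subset hT.subset_base_union
    ((inter_subset_right.trans (subset_closure.trans hUc)).trans subset_union_right)
  eventually_mem_iff := by
    filter_upwards [hT.eventually_mem_iff, eventually_notMem_stripes hN] with s h1 h2
    simp [h1, h2]

/-- The mean density seen after filling a collar is never close to `1 / 2`. -/
lemma exists_tendsto_collar_average {T U : Set ℝ} (hT : IsOpen T) (hU : IsOpen U)
    (hTfr : (frontier T).Finite) (hUfr : (frontier U).Finite) (hTU : frontier T ⊆ U) {x : E}
    (hx : x ≠ 0) :
    ∃ w : ℝ, (w = 0 ∨ w = 1 ∨ 1 / 6 ≤ |w - 1 / 2|) ∧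
      Tendsto (fun e => 2 / 3 * ballRatio μ (shell E T) x e +
        1 / 3 * ballRatio μ (shell E (T ∪ U)) x e) (𝓝[>] 0) (𝓝 w) := by
  have hTm := hT.measurableSet
  have hTUm := (hT.union hU).measurableSet
  by_cases hf : Real.log ‖x‖ ∈ frontier T
  · obtain ⟨v, hv, hd⟩ := exists_hasDensity_shell μ hTm hTfr hx
    have hd' := hasDensity_shell_one μ hTUm hx
      ((hT.union hU).mem_nhds (Or.inr (hTU hf)))
    refine ⟨2 / 3 * v + 1 / 3 * 1, ?_, (hd.const_mul _).add (hd'.const_mul _)⟩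
    rcases hv with rfl | rfl | rfl <;> norm_num [abs_of_pos, abs_of_neg]
  · by_cases hi : Real.log ‖x‖ ∈ T
    · have hd := hasDensity_shell_one μ hTm hx (hT.mem_nhds hi)
      have hd' := hasDensity_shell_one μ hTUm hx
        ((hT.union hU).mem_nhds (Or.inl hi))
      refine ⟨2 / 3 * 1 + 1 / 3 * 1, ?_, (hd.const_mul _).add (hd'.const_mul _)⟩
      norm_num
    · have hc : Tᶜ ∈ 𝓝 (Real.log ‖x‖) := by
        rw [← mem_interior_iff_mem_nhds, interior_compl]
        exact fun h => hf ⟨h, fun h' => hi (interior_subset h')⟩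
      have hd := hasDensity_shell_zero μ hTm hx hc
      obtain ⟨v, hv, hd'⟩ := exists_hasDensity_shell μ hTUm (finite_frontier_union hTfr hUfr) hx
      refine ⟨2 / 3 * 0 + 1 / 3 * v, ?_, (hd.const_mul _).add (hd'.const_mul _)⟩
      rcases hv with rfl | rfl | rfl <;> norm_num [abs_of_pos, abs_of_neg]

variable [Nontrivial E]

/-- The frontier of a profile has neighbourhoods of arbitrarily small measure. -/
lemma IsProfile.exists_collar {T₀ T : Set ℝ} (hT : IsProfile T₀ T) {τ : ℝ} (hτ : 0 < τ) :
    ∃ U : Set ℝ, IsOpen U ∧ (frontier U).Finite ∧ closure U ⊆ Ioo (-1) 1 ∧ frontier T ⊆ U ∧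
      μ (shell E U) ≤ ENNReal.ofReal τ := by
  set U : ℝ → Set ℝ := fun δ => ⋃ s ∈ frontier T, Ioo (s - δ) (s + δ) with hU
  have hopen : ∀ δ, IsOpen (U δ) := fun δ => isOpen_biUnion fun _ _ => isOpen_Ioo
  have hclosure : ∀ᶠ δ : ℝ in 𝓝[>] 0, closure (U δ) ⊆ Ioo (-1) 1 := by
    have h1 : ∀ᶠ δ : ℝ in 𝓝[>] 0, ∀ s ∈ frontier T, -1 < s - δ ∧ s + δ < 1 := by
      rw [hT.finite_frontier.eventually_all]
      intro s hs
      have hs' := hT.frontier_subset hs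
      have hpos : 0 < min (s + 1) (1 - s) := lt_min (by linarith [hs'.1]) (by linarith [hs'.2])
      filter_upwards [Ioo_mem_nhdsGT hpos] with δ hδ
      have h2 := lt_min_iff.1 hδ.2
      constructor <;> linarith [h2.1, h2.2]
    filter_upwards [h1] with δ hδ
    rw [hU, hT.finite_frontier.closure_biUnion]
    refine iUnion₂_subset fun s hs => (closure_minimal Ioo_subset_Icc_self isClosed_Icc).trans ?_
    exact fun u hu => ⟨(hδ s hs).1.trans_le hu.1, hu.2.trans_lt (hδ s hs).2⟩
  have hbdd : shell E (Ioo (-1) 1) ⊆ ball (0 : E) (Real.exp 1) := by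
    rintro x ⟨hx, hx'⟩
    rw [mem_ball_zero_iff]
    exact (Real.log_lt_iff_lt_exp (norm_pos_iff.2 hx)).1 hx'.2
  have hlim : Tendsto (fun δ => μ (shell E (U δ))) (𝓝[>] 0) (𝓝 0) := by
    rw [← measure_empty (μ := μ)]
    refine tendsto_measure_of_ae_tendsto_indicator _ MeasurableSet.empty
      (fun δ => (isOpen_shell (hopen δ)).measurableSet)
      (measurableSet_ball (x := (0 : E)) (ε := Real.exp 1)) measure_ball_lt_top.ne ?_ ?_
    · filter_upwards [hclosure] with δ hδ
      exact (shell_mono (subset_closure.trans hδ)).trans hbdd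
    · filter_upwards [measure_eq_zero_iff_ae_notMem.1
        (measure_shell_of_countable μ hT.finite_frontier.countable)] with x hx
      have h1 : ∀ᶠ δ : ℝ in 𝓝[>] 0, ∀ s ∈ frontier T, x ∉ shell E (Ioo (s - δ) (s + δ)) := by
        rw [hT.finite_frontier.eventually_all]
        intro s hs
        by_cases hx0 : x = 0
        · exact Eventually.of_forall fun δ h => h.1 hx0
        have hne : Real.log ‖x‖ ≠ s := fun h => hx ⟨hx0, h ▸ hs⟩
        filter_upwards [Ioo_mem_nhdsGT (abs_pos.2 (sub_ne_zero.2 hne))] with δ hδ h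
        have h2 : |Real.log ‖x‖ - s| < δ := by
          rw [abs_lt]
          constructor <;> linarith [h.2.1, h.2.2]
        exact lt_asymm h2 hδ.2
      filter_upwards [h1] with δ hδ
      simp only [mem_empty_iff_false, iff_false]
      rintro ⟨hx0, h⟩
      simp only [hU, mem_iUnion, exists_prop] at h
      obtain ⟨s, hs, hs'⟩ := h
      exact hδ s hs ⟨hx0, hs'⟩
  have hsmall := hlim.eventually (gt_mem_nhds (ENNReal.ofReal_pos.2 hτ))
  obtain ⟨δ, ⟨h1, h2⟩, h3⟩ := ((hclosure.and hsmall).and self_mem_nhdsWithin).exists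
  have h3' : (0 : ℝ) < δ := h3
  refine ⟨U δ, hopen δ, finite_frontier_biUnion_Ioo hT.finite_frontier _ _, h1, ?_, h2.le⟩
  intro s hs
  exact mem_biUnion hs ⟨by linarith, by linarith⟩

/-- Filling a collar of a profile with stripes has the effect, in the limit, of filling it with
density `1 / 3`. -/
lemma tendsto_ballRatio_union_stripes_inter {T U : Set ℝ} (hT : IsOpen T)
    (hTfr : (frontier T).Finite) (hU : IsOpen U) (hUfr : (frontier U).Finite)
    (hUc : closure U ⊆ Ioo (-1) 1) (x : E) (e : ℝ) :
    Tendsto (fun N : ℕ => ballRatio μ (shell E (T ∪ (stripes N ∩ U))) x e) atTop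
      (𝓝 (2 / 3 * ballRatio μ (shell E T) x e + 1 / 3 * ballRatio μ (shell E (T ∪ U)) x e)) := by
  set B : Set E := ball x e ∩ shell E (U \ T) with hB
  have hUT : MeasurableSet (U \ T) := hU.measurableSet.diff hT.measurableSet
  have hBm : MeasurableSet B := measurableSet_ball.inter (measurableSet_shell hUT)
  have hfr : μ (frontier B) = 0 := by
    refine measure_mono_null (frontier_inter_subset _ _) (measure_union_null ?_ ?_)
    · refine measure_mono_null inter_subset_left
        (measure_mono_null frontier_ball_subset_sphere (Measure.addHaar_sphere μ x e))
    · refine measure_mono_null inter_subset_right (measure_frontier_shell μ (Finite.countable ?_))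
      rw [sdiff_eq]
      exact finite_frontier_inter hUfr (by rwa [frontier_compl])
  have hw := tendsto_measureReal_inter_shell_stripes μ hBm
    (isBounded_ball.subset inter_subset_left) hfr
    (inter_subset_right.trans (shell_mono (sdiff_subset.trans (subset_closure.trans hUc))))
  have hfin : ∀ A : Set E, μ (A ∩ ball x e) ≠ ⊤ := fun A =>
    measure_ne_top_of_subset inter_subset_right measure_ball_lt_top.ne
  have hBfin : μ B ≠ ⊤ := measure_ne_top_of_subset inter_subset_left measure_ball_lt_top.ne
  have h1 : μ.real (shell E (T ∪ U) ∩ ball x e) = μ.real (shell E T ∩ ball x e) + μ.real B := by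
    rw [← measureReal_union _ hBm (hfin _) hBfin]
    · congr 1
      ext y
      simp only [hB, shell, mem_inter_iff, mem_union, mem_ofPred_eq, Set.mem_sdiff]
      tauto
    · rw [Set.disjoint_left]
      rintro y ⟨⟨-, h⟩, -⟩ ⟨-, -, h'⟩
      exact h'.2 h
  have h2 : ∀ N : ℕ, μ.real (shell E (T ∪ (stripes N ∩ U)) ∩ ball x e) =
      μ.real (shell E T ∩ ball x e) + μ.real (B ∩ shell E (stripes N)) := by
    intro N
    rw [← measureReal_union _ (hBm.inter (isOpen_shell (isOpen_stripes N)).measurableSet) (hfin _)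
      (measure_ne_top_of_subset inter_subset_left hBfin)]
    · congr 1
      ext y
      simp only [hB, shell, mem_inter_iff, mem_union, mem_ofPred_eq, Set.mem_sdiff]
      tauto
    · rw [Set.disjoint_left]
      rintro y ⟨⟨-, h⟩, -⟩ ⟨⟨-, -, h'⟩, -⟩
      exact h'.2 h
  simp only [ballRatio, h1, h2]
  have h3 := (hw.const_add (μ.real (shell E T ∩ ball x e))).div_const (μ.real (ball x e))
  convert h3 using 2
  ring

/-- A set whose density at `x` is `0`, `1 / 2` or `1`, and whose ball averages at one scale are
close to a value far from `1 / 2`, or to `0` or `1`, oscillates at `x`. -/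
lemma oscillates_of_abs_sub_le {X : Type*} [MetricSpace X] [MeasurableSpace X] {μ : Measure X}
    {A : Set X} {x : X} {v w η e : ℝ} (hη : 0 < η) (he : e ∈ Ioo 0 η)
    (hv : v = 0 ∨ v = 1 / 2 ∨ v = 1) (hd : HasDensity μ A x v)
    (hw : w = 0 ∨ w = 1 ∨ 1 / 6 ≤ |w - 1 / 2|)
    (hclose : |ballRatio μ A x e - w| ≤ min (1 / 20) (η / 2)) : Oscillates μ A η x := by
  have ht : 0 < min (1 / 20) (η / 2) := lt_min (by norm_num) (by linarith)
  have hc1 := hclose.trans (min_le_left _ _)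
  have hc2 := hclose.trans (min_le_right _ _)
  have hev := (hasDensity_iff_tendsto_ballRatio.1 hd).eventually (Metric.ball_mem_nhds v ht)
  obtain ⟨e', hball, he'⟩ := (hev.and (Ioo_mem_nhdsGT hη)).exists
  have hd1 : |ballRatio μ A x e' - v| < 1 / 20 := lt_of_lt_of_le hball (min_le_left _ _)
  have hd2 : |ballRatio μ A x e' - v| < η / 2 := lt_of_lt_of_le hball (min_le_right _ _)
  rw [abs_lt] at hd1 hd2
  rw [abs_le] at hc1 hc2
  rcases hv with rfl | rfl | rfl
  · exact ⟨e', he', e', he', Or.inl (by linarith)⟩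
  · rcases hw with rfl | rfl | hw
    · exact ⟨e, he, e, he, Or.inl (by linarith)⟩
    · exact ⟨e, he, e, he, Or.inr (Or.inl (by linarith))⟩
    · refine ⟨e, he, e', he', Or.inr (Or.inr ?_)⟩
      rw [lt_abs]
      rcases le_abs.1 hw with h | h
      · exact Or.inl (by linarith)
      · exact Or.inr (by linarith)
  · exact ⟨e', he', e', he', Or.inr (Or.inl (by linarith))⟩

/-- Every profile can be enlarged by a set of small measure so as to oscillate on a given compact
set. -/
lemma IsProfile.exists_oscillates {T₀ T : Set ℝ} (hT : IsProfile T₀ T) {K : Set E}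
    (hK : IsCompact K) (hK0 : (0 : E) ∉ K) {τ η : ℝ} (hτ : 0 < τ) (hη : 0 < η) :
    ∃ T' : Set ℝ, IsProfile T₀ T' ∧ T ⊆ T' ∧
      μ (shell E T' \ shell E T) ≤ ENNReal.ofReal τ ∧
      ∀ x ∈ K, Oscillates μ (shell E T') η x := by
  obtain ⟨U, hU, hUfr, hUc, hTU, hUτ⟩ := hT.exists_collar μ hτ
  have hprof : ∀ N : ℕ, 0 < N → IsProfile T₀ (T ∪ (stripes N ∩ U)) := fun N hN =>
    hT.union_stripes_inter hU hUfr hUc hN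
  have hosc : ∀ᶠ N : ℕ in atTop, ∀ x ∈ K, Oscillates μ (shell E (T ∪ (stripes N ∩ U))) η x := by
    refine hK.induction_on (p := fun s => ∀ᶠ N : ℕ in atTop, ∀ x ∈ s,
      Oscillates μ (shell E (T ∪ (stripes N ∩ U))) η x) ?_ ?_ ?_ ?_
    · simp
    · intro s s' hss h
      exact h.mono fun N hN x hx => hN x (hss hx)
    · intro s s' h h'
      filter_upwards [h, h'] with N hN hN' x hx
      exact hx.elim (hN x) (hN' x)
    · intro x hx
      have hx0 : x ≠ 0 := fun h => hK0 (h ▸ hx)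
      obtain ⟨w, hw, hlim⟩ := exists_tendsto_collar_average μ hT.isOpen hU hT.finite_frontier hUfr
        hTU hx0
      have ht : 0 < min (1 / 20) (η / 2) / 3 := by
        have : 0 < min (1 / 20) (η / 2) := lt_min (by norm_num) (by linarith)
        linarith
      obtain ⟨e, hball, he⟩ := ((hlim.eventually (Metric.closedBall_mem_nhds w ht)).and
        (Ioo_mem_nhdsGT hη)).exists
      have hlimN := tendsto_ballRatio_union_stripes_inter μ hT.isOpen hT.finite_frontier hU hUfr
        hUc x e
      refine ⟨_, mem_nhdsWithin_of_mem_nhds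
        ((eventually_abs_ballRatio_sub_le μ x he.1 ht).and (isOpen_ne.mem_nhds hx0)), ?_⟩
      filter_upwards [hlimN.eventually (Metric.closedBall_mem_nhds _ ht),
        eventually_gt_atTop 0] with N hN hN0 y hy
      obtain ⟨v, hv, hd⟩ := exists_hasDensity_shell μ (hprof N hN0).isOpen.measurableSet
        (hprof N hN0).finite_frontier hy.2
      refine oscillates_of_abs_sub_le hη he hv hd hw ?_
      have h1 := hy.1 (shell E (T ∪ (stripes N ∩ U)))
      rw [Real.dist_eq] at hN hball
      rw [abs_le] at h1 hN hball ⊢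
      constructor <;> linarith
  obtain ⟨N, hN, hN0⟩ := (hosc.and (eventually_gt_atTop 0)).exists
  refine ⟨_, hprof N hN0, subset_union_left, (measure_mono ?_).trans hUτ, hN⟩
  rintro x ⟨⟨hx0, hx⟩, hx'⟩
  rcases hx with hx | hx
  · exact absurd ⟨hx0, hx⟩ hx'
  · exact ⟨hx0, hx.2⟩

end Construction

lemma isProfile_Iio : IsProfile (Iio 0) (Iio 0) where
  isOpen := isOpen_Iio
  finite_frontier := by simp
  frontier_subset := by simp
  base_subset := subset_rfl
  subset_base_union := subset_union_left
  eventually_mem_iff := by simp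

lemma isProfile_Ioi : IsProfile (Ioi 0) (Ioi 0) where
  isOpen := isOpen_Ioi
  finite_frontier := by simp
  frontier_subset := by simp
  base_subset := subset_rfl
  subset_base_union := subset_union_left
  eventually_mem_iff := by simp

lemma log_norm_neg_of_mem_ball {E : Type*} [NormedAddCommGroup E] {y : E} (hy0 : y ≠ 0)
    (hy : y ∈ ball (0 : E) 1) : Real.log ‖y‖ < 0 :=
  Real.log_neg (norm_pos_iff.2 hy0) (mem_ball_zero_iff.1 hy)

section Limit

variable {E : Type*} [NormedAddCommGroup E] [MeasurableSpace E] (μ : Measure E)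

/-- If every profile has arbitrarily small enlargements at which the `k`-th condition holds stably,
then all the conditions hold simultaneously for the union of a sequence of profiles. -/
lemma exists_shell_forall_of_stable {T₀ : Set ℝ} (h₀ : IsProfile T₀ T₀) {P : ℕ → Set E → Prop}
    (hstep : ∀ T, IsProfile T₀ T → ∀ τ : ℝ, 0 < τ → ∀ k, ∃ T', IsProfile T₀ T' ∧ T ⊆ T' ∧
      μ (shell E T' \ shell E T) ≤ ENNReal.ofReal τ ∧ ∃ σ : ℝ, 0 < σ ∧ ∀ A, shell E T' ⊆ A →
        μ (A \ shell E T') ≤ ENNReal.ofReal σ → P k A) :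
    ∃ T, IsOpen T ∧ T₀ ⊆ T ∧ T ⊆ T₀ ∪ Ioo (-1) 1 ∧ ∀ k, P k (shell E T) := by
  have hstep' : ∀ (k : ℕ) (p : {p : Set ℝ × ℝ // IsProfile T₀ p.1 ∧ 0 < p.2}),
      ∃ q : {p : Set ℝ × ℝ // IsProfile T₀ p.1 ∧ 0 < p.2}, p.1.1 ⊆ q.1.1 ∧
        μ (shell E q.1.1 \ shell E p.1.1) ≤ ENNReal.ofReal (p.1.2 / 2) ∧ q.1.2 ≤ p.1.2 / 2 ∧
        ∀ A, shell E q.1.1 ⊆ A → μ (A \ shell E q.1.1) ≤ ENNReal.ofReal q.1.2 → P k A := by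
    rintro k ⟨⟨T, τ⟩, hT, hτ⟩
    obtain ⟨T', hT', hsub, hμ, σ, hσ, hP⟩ := hstep T hT (τ / 2) (half_pos hτ) k
    refine ⟨⟨(T', min σ (τ / 2)), hT', lt_min hσ (half_pos hτ)⟩, hsub, hμ, min_le_right _ _,
      fun A hA hμA => hP A hA (hμA.trans (ENNReal.ofReal_le_ofReal (min_le_left _ _)))⟩
  choose next hsub hμ hle hP using hstep'
  set s : ℕ → {p : Set ℝ × ℝ // IsProfile T₀ p.1 ∧ 0 < p.2} :=
    fun m => Nat.rec ⟨(T₀, 1), h₀, one_pos⟩ next m with hs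
  set T : ℕ → Set ℝ := fun m => (s m).1.1 with hT
  set σ : ℕ → ℝ := fun m => (s m).1.2 with hσ
  have hTmono : Monotone T := monotone_nat_of_le_succ fun m => hsub m (s m)
  have hprof : ∀ m, IsProfile T₀ (T m) := fun m => (s m).2.1
  have hσpos : ∀ m, 0 < σ m := fun m => (s m).2.2
  have hbound : ∀ m j, μ (shell E (T (m + j)) \ shell E (T m)) ≤
      ENNReal.ofReal (σ m - σ (m + j)) := by
    intro m j
    induction j with
    | zero => simp
    | succ j ih =>
      have h1 : σ (m + j + 1) ≤ σ (m + j) / 2 := hle (m + j) (s (m + j))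
      have h2 : μ (shell E (T (m + j + 1)) \ shell E (T (m + j))) ≤
        ENNReal.ofReal (σ (m + j) / 2) := hμ (m + j) (s (m + j))
      have h3 : 0 ≤ σ m - σ (m + j) := by
        have : Antitone σ := antitone_nat_of_succ_le fun i =>
          (show σ (i + 1) ≤ σ i / 2 from hle i (s i)).trans (by linarith [hσpos i])
        linarith [this (Nat.le_add_right m j)]
      calc μ (shell E (T (m + j + 1)) \ shell E (T m))
          ≤ μ (shell E (T (m + j)) \ shell E (T m)) +
            μ (shell E (T (m + j + 1)) \ shell E (T (m + j))) := by
            refine (measure_mono fun x hx => ?_).trans (measure_union_le _ _)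
            by_cases h : x ∈ shell E (T (m + j))
            · exact Or.inl ⟨h, hx.2⟩
            · exact Or.inr ⟨hx.1, h⟩
        _ ≤ ENNReal.ofReal (σ m - σ (m + j)) + ENNReal.ofReal (σ (m + j) / 2) := add_le_add ih h2
        _ = ENNReal.ofReal (σ m - σ (m + j) + σ (m + j) / 2) :=
            (ENNReal.ofReal_add h3 (half_pos (hσpos _)).le).symm
        _ ≤ ENNReal.ofReal (σ m - σ (m + (j + 1))) :=
            ENNReal.ofReal_le_ofReal (by rw [← add_assoc]; linarith)
  have hlim : ∀ m, μ (shell E (⋃ i, T i) \ shell E (T m)) ≤ ENNReal.ofReal (σ m) := by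
    intro m
    have hcover : shell E (⋃ i, T i) \ shell E (T m) ⊆
        ⋃ j, shell E (T (m + j)) \ shell E (T m) := by
      rintro x ⟨⟨hx0, hx⟩, hxm⟩
      obtain ⟨i, hi⟩ := mem_iUnion.1 hx
      exact mem_iUnion.2 ⟨i, ⟨hx0, hTmono (Nat.le_add_left i m) hi⟩, hxm⟩
    have hmono : Monotone fun j => shell E (T (m + j)) \ shell E (T m) := fun i j hij =>
      sdiff_subset_sdiff_left (shell_mono (hTmono (Nat.add_le_add_left hij m)))
    refine (measure_mono hcover).trans ?_
    rw [hmono.measure_iUnion]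
    exact iSup_le fun j => (hbound m j).trans
      (ENNReal.ofReal_le_ofReal (by linarith [hσpos (m + j)]))
  refine ⟨⋃ i, T i, isOpen_iUnion fun i => (hprof i).isOpen,
    (hprof 0).base_subset.trans (subset_iUnion T 0),
    iUnion_subset fun i => (hprof i).subset_base_union, fun k => ?_⟩
  exact hP k (s k) _ (shell_mono (subset_iUnion T (k + 1))) (hlim (k + 1))

lemma hasDensity_shell_Ioi_zero : HasDensity μ (shell E (Ioi 0)) 0 0 := by
  have hempty : HasDensity μ (∅ : Set E) 0 0 := by
    simp [HasDensity]
  refine hempty.congr_of_eventually ?_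
  filter_upwards [ball_mem_nhds (0 : E) one_pos] with y hy
  exact ⟨fun h => h.elim, fun h => lt_asymm h.2 (log_norm_neg_of_mem_ball h.1 hy)⟩

variable [InnerProductSpace ℝ E] [BorelSpace E] [FiniteDimensional ℝ E] [μ.IsAddHaarMeasure]

lemma hasDensity_shell_Iio_sphere {x : E} (hx : ‖x‖ = 1) :
    HasDensity μ (shell E (Iio 0)) x (1 / 2) := by
  have hx0 : x ≠ 0 := by
    rintro rfl
    simp at hx
  have h := hasDensity_shell μ (T := Iio 0) measurableSet_Iio hx0 (a := False) (b := True) (by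
    rw [hx, Real.log_one]
    filter_upwards [self_mem_nhdsWithin] with s hs
    simpa using (mem_Ioi.1 hs).le) (by
    rw [hx, Real.log_one]
    filter_upwards [self_mem_nhdsWithin] with s hs
    simpa using hs)
  simpa using h

lemma hasDensity_shell_Ioi_sphere {x : E} (hx : ‖x‖ = 1) :
    HasDensity μ (shell E (Ioi 0)) x (1 / 2) := by
  have hx0 : x ≠ 0 := by
    rintro rfl
    simp at hx
  have h := hasDensity_shell μ (T := Ioi 0) measurableSet_Ioi hx0 (a := True) (b := False) (by
    rw [hx, Real.log_one]
    filter_upwards [self_mem_nhdsWithin] with s hs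
    simpa using hs) (by
    rw [hx, Real.log_one]
    filter_upwards [self_mem_nhdsWithin] with s hs
    simpa using (mem_Iio.1 hs).le)
  simpa using h

variable [Nontrivial E]

/-- A shell whose density is `1 / 2` on the unit sphere and `0` or `1` away from an annulus around
it can be enlarged, inside that annulus, to a spongy shell. -/
lemma exists_isSpongy_shell {T₀ : Set ℝ} (h₀ : IsProfile T₀ T₀)
    (hsphere : ∀ x : E, ‖x‖ = 1 → HasDensity μ (shell E T₀) x (1 / 2))
    (hzero : HasDensity μ (shell E T₀) 0 0 ∨ HasDensity μ (shell E T₀) 0 1) :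
    ∃ T, IsOpen T ∧ T₀ ⊆ T ∧ T ⊆ T₀ ∪ Ioo (-1) 1 ∧ IsSpongy μ (shell E T) := by
  set K : Set E := closedBall 0 (Real.exp 1) \ ball 0 (Real.exp (-1)) with hK
  have hKc : IsCompact K := (isCompact_closedBall _ _).diff isOpen_ball
  have hK0 : (0 : E) ∉ K := fun h => h.2 (mem_ball_self (Real.exp_pos _))
  obtain ⟨x₀, hx₀⟩ := exists_norm_eq E zero_le_one
  have hx₀0 : x₀ ≠ 0 := by
    rintro rfl
    simp at hx₀
  obtain ⟨T, hTo, hT₀, hT₁, hP⟩ := exists_shell_forall_of_stable μ h₀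
    (P := fun k A => (∀ x ∈ K, Oscillates μ A (1 / (k + 1)) x) ∧
      ∃ e ∈ Ioo (0 : ℝ) (1 / (k + 1)), |ballRatio μ A x₀ e - 1 / 2| ≤ 1 / 4) (by
    intro T hT τ hτ k
    have hη : (0 : ℝ) < 1 / (k + 1) := Nat.one_div_pos_of_nat
    obtain ⟨T', hT', hsub, hμ, hosc⟩ := hT.exists_oscillates μ hKc hK0 hτ hη
    obtain ⟨σ₁, hσ₁, hK'⟩ := exists_oscillates_of_measure_sdiff_le μ hKc hosc
    have hd : HasDensity μ (shell E T') x₀ (1 / 2) := by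
      refine (hsphere x₀ hx₀).congr_of_eventually ?_
      have hlog : Tendsto (fun y : E => Real.log ‖y‖) (𝓝 x₀) (𝓝 0) := by
        have := (continuousAt_log_norm hx₀0).tendsto
        rwa [hx₀, Real.log_one] at this
      filter_upwards [hlog.eventually hT'.eventually_mem_iff] with y hy
      exact and_congr_right fun _ => hy.symm
    obtain ⟨e, hball, he⟩ := (((hasDensity_iff_tendsto_ballRatio.1 hd).eventually
      (Metric.ball_mem_nhds _ (show (0 : ℝ) < 1 / 8 by norm_num))).and (Ioo_mem_nhdsGT hη)).exists
    obtain ⟨σ₂, hσ₂, hev⟩ := exists_eventually_abs_ballRatio_sub_le μ (shell E T') x₀ he.1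
      (show (0 : ℝ) < 1 / 8 by norm_num)
    refine ⟨T', hT', hsub, hμ, min σ₁ σ₂, lt_min hσ₁ hσ₂, fun A hA hμA =>
      ⟨hK' A hA (hμA.trans (ENNReal.ofReal_le_ofReal (min_le_left _ _))), e, he, ?_⟩⟩
    have h1 := hev.self_of_nhds A hA (hμA.trans (ENNReal.ofReal_le_ofReal (min_le_right _ _)))
    have h2 : |ballRatio μ (shell E T') x₀ e - 1 / 2| < 1 / 8 := hball
    rw [abs_lt] at h2
    rw [abs_le] at h1 ⊢
    constructor <;> linarith)
  refine ⟨T, hTo, hT₀, hT₁, ?_⟩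
  have hsharp : ∀ (x : E) (v : ℝ), 0 < v → v < 1 → ¬ HasDensity μ (shell E T) x v := by
    intro x v hv0 hv1 hv
    by_cases hx : x ∈ K
    · exact not_hasDensity_of_oscillates (fun k => (hP k).1 x hx) hv0 hv1 hv
    have hnear : ∀ᶠ y in 𝓝 x, (y ∈ shell E T ↔ y ∈ shell E T₀) := by
      filter_upwards [hKc.isClosed.isOpen_compl.mem_nhds hx] with y hy
      refine and_congr_right fun hy0 => ⟨fun h => (hT₁ h).resolve_right fun h' => hy ?_,
        fun h => hT₀ h⟩
      have hpos := norm_pos_iff.2 hy0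
      refine ⟨mem_closedBall_zero_iff.2 ((Real.log_lt_iff_lt_exp hpos).1 h'.2).le, fun h'' => ?_⟩
      exact lt_asymm (mem_ball_zero_iff.1 h'') ((Real.lt_log_iff_exp_lt hpos).1 h'.1)
    have hv' := hv.congr_of_eventually hnear
    have hne : ∀ w : ℝ, w = 0 ∨ w = 1 → ¬ HasDensity μ (shell E T₀) x w := by
      rintro w hw h
      have := tendsto_nhds_unique h hv'
      rcases hw with rfl | rfl <;> linarith
    by_cases hx0 : x = 0
    · subst hx0
      exact hzero.elim (hne 0 (Or.inl rfl)) (hne 1 (Or.inr rfl))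
    have hpos := norm_pos_iff.2 hx0
    have hfr : Real.log ‖x‖ ∉ frontier T₀ := fun h => hx (by
      have h' := h₀.frontier_subset h
      exact ⟨mem_closedBall_zero_iff.2 ((Real.log_lt_iff_lt_exp hpos).1 h'.2).le, fun h'' =>
        lt_asymm (mem_ball_zero_iff.1 h'') ((Real.lt_log_iff_exp_lt hpos).1 h'.1)⟩)
    by_cases hi : Real.log ‖x‖ ∈ T₀
    · exact hne 1 (Or.inr rfl)
        (hasDensity_shell_one μ h₀.isOpen.measurableSet hx0 (h₀.isOpen.mem_nhds hi))
    · refine hne 0 (Or.inl rfl) (hasDensity_shell_zero μ h₀.isOpen.measurableSet hx0 ?_)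
      rw [← mem_interior_iff_mem_nhds, interior_compl]
      exact fun h => hfr ⟨h, fun h' => hi (interior_subset h')⟩
  refine ⟨hsharp, x₀, ?_⟩
  rintro ⟨v, hv⟩
  have hmem : |v - 1 / 2| ≤ 1 / 4 := by
    by_contra! hlt
    have hev := ((hasDensity_iff_tendsto_ballRatio.1 hv).sub_const (1 / 2)).abs.eventually
      (lt_mem_nhds hlt)
    obtain ⟨δ, hδ, hsub⟩ := mem_nhdsGT_iff_exists_Ioo_subset.1 hev
    obtain ⟨k, hk⟩ := exists_nat_one_div_lt (show (0 : ℝ) < δ from hδ)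
    obtain ⟨e, he, hle⟩ := (hP k).2
    exact absurd hle (not_le.2 (hsub ⟨he.1, he.2.trans hk⟩))
  rw [abs_le] at hmem
  exact hsharp x₀ v (by linarith) (by linarith) hv

lemma hasDensity_shell_Iio_zero : HasDensity μ (shell E (Iio 0)) 0 1 := by
  have huniv : HasDensity μ (univ : Set E) 0 1 := by
    refine Tendsto.congr' ?_ tendsto_const_nhds
    filter_upwards [self_mem_nhdsWithin] with e he
    rw [univ_inter]
    exact (div_self (measureReal_ball_pos μ (0 : E) he).ne').symm
  have hcompl : HasDensity μ ({0}ᶜ : Set E) 0 1 :=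
    huniv.congr_ae (eventuallyEq_univ.2 (compl_mem_ae_iff.2 (measure_singleton _))).symm
  refine hcompl.congr_of_eventually ?_
  filter_upwards [ball_mem_nhds (0 : E) one_pos] with y hy
  exact ⟨fun h => ⟨h, log_norm_neg_of_mem_ball h hy⟩, fun h => h.1⟩

end Limit

lemma HasDensity.compl {X : Type*} [MetricSpace X] [ProperSpace X] [MeasurableSpace X]
    [OpensMeasurableSpace X] {μ : Measure X} [μ.IsOpenPosMeasure] [IsFiniteMeasureOnCompacts μ]
    {A : Set X} {x : X} {v : ℝ} (hA : MeasurableSet A) (h : HasDensity μ A x v) :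
    HasDensity μ Aᶜ x (1 - v) := by
  refine Tendsto.congr' ?_ (h.const_sub 1)
  filter_upwards [self_mem_nhdsWithin] with e he
  have hpos := measureReal_ball_pos μ x he
  have hsum : μ.real (A ∩ ball x e) + μ.real (Aᶜ ∩ ball x e) = μ.real (ball x e) := by
    rw [inter_comm A, inter_comm Aᶜ, ← sdiff_eq]
    exact measureReal_inter_add_sdiff hA measure_ball_lt_top.ne
  change 1 - μ.real (A ∩ ball x e) / μ.real (ball x e) =
    μ.real (Aᶜ ∩ ball x e) / μ.real (ball x e)
  rw [eq_div_iff hpos.ne', sub_mul, div_mul_cancel₀ _ hpos.ne']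
  linarith

lemma IsSpongy.compl {X : Type*} [MetricSpace X] [ProperSpace X] [MeasurableSpace X]
    [OpensMeasurableSpace X] {μ : Measure X} [μ.IsOpenPosMeasure] [IsFiniteMeasureOnCompacts μ]
    {A : Set X} (hA : MeasurableSet A) (h : IsSpongy μ A) : IsSpongy μ Aᶜ := by
  have hback : ∀ {x v}, HasDensity μ Aᶜ x v → HasDensity μ A x (1 - v) := fun hv => by
    simpa using hv.compl hA.compl
  refine ⟨fun x v h0 h1 hv => h.1 x (1 - v) (by linarith) (by linarith) (hback hv), ?_⟩
  obtain ⟨x, hx⟩ := h.2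
  exact ⟨x, fun ⟨v, hv⟩ => hx ⟨1 - v, hback hv⟩⟩

/-- **Existence of bounded spongy subsets of `ℝⁿ`.** For every `n ≥ 1` there is a bounded
spongy subset of `ℝⁿ` (with the Euclidean metric and Lebesgue measure); moreover it can be
taken to be open, and it can be taken to be closed. -/
theorem stmt_14 (n : ℕ) (hn : 1 ≤ n) :
    (∃ S : Set (EuclideanSpace ℝ (Fin n)), IsOpen S ∧ Bornology.IsBounded S ∧
      MeasurableSet S ∧ IsSpongy volume S) ∧
    (∃ S : Set (EuclideanSpace ℝ (Fin n)), IsClosed S ∧ Bornology.IsBounded S ∧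
      MeasurableSet S ∧ IsSpongy volume S) := by
  have : Nonempty (Fin n) := ⟨⟨0, hn⟩⟩
  constructor
  · obtain ⟨T, hTo, -, hT, hsp⟩ := exists_isSpongy_shell
      (volume : Measure (EuclideanSpace ℝ (Fin n))) isProfile_Iio
      (fun x hx => hasDensity_shell_Iio_sphere _ hx) (Or.inr (hasDensity_shell_Iio_zero _))
    refine ⟨_, isOpen_shell hTo, (isBounded_ball (x := 0) (r := Real.exp 1)).subset ?_,
      (isOpen_shell hTo).measurableSet, hsp⟩
    rintro x ⟨hx0, hx⟩
    rw [mem_ball_zero_iff, ← Real.log_lt_iff_lt_exp (norm_pos_iff.2 hx0)]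
    rcases hT hx with h | h
    · exact lt_trans h one_pos
    · exact h.2
  · obtain ⟨T, hTo, hT, -, hsp⟩ := exists_isSpongy_shell
      (volume : Measure (EuclideanSpace ℝ (Fin n))) isProfile_Ioi
      (fun x hx => hasDensity_shell_Ioi_sphere _ hx) (Or.inl (hasDensity_shell_Ioi_zero _))
    have hopen := isOpen_shell (E := EuclideanSpace ℝ (Fin n)) hTo
    refine ⟨_, hopen.isClosed_compl, (isBounded_closedBall (x := 0) (r := 1)).subset ?_,
      hopen.measurableSet.compl, hsp.compl hopen.measurableSet⟩
    intro x hx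
    rw [mem_closedBall_zero_iff]
    by_contra! h
    exact hx ⟨norm_pos_iff.1 (one_pos.trans h), hT (Real.log_pos h)⟩
end
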